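/- Fix an integer n ≥ 1. There exist constants C, C' > 0 such that, with c = 1 + 1/log(2πY) and V = e^{C√(log Y)}, as Y → ∞: (1/2π) ∫_{−V}^{V} (ζ'/ζ)^{(n)}(c + it) · ζ(c + it) · Y^{c+it}/(c + it) dt = M_n(Y) + O(Y e^{−C'√(log Y)}), where M_n(Y) = (−1)^{n+1} (1/(n+1)) Y log^{n+1} Y + (−1)^{n+1} ∑_{k=0}^{n} binom(n,k) (−1)^k k! (−1 + ∑_{j=0}^{k} (−1)^j C_j) Y log^{n−k} Y + n! A_n Y. -/

import Mathlib

open Complex Finset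

/-- The vertical line integral
`(1/2πi) ∫_{c-iV}^{c+iV} (ζ'/ζ)^{(n)}(s) ζ(s) Y^s / s ds`, written as a real
integral in `t`. -/
noncomputable def perronIntegral (n : ℕ) (c V Y : ℝ) : ℂ :=
  ((1 / (2 * Real.pi) : ℝ) : ℂ) *
    ∫ t in -V..V,
      iteratedDeriv n (fun s => deriv riemannZeta s / riemannZeta s) (↑c + ↑t * I) *
        riemannZeta (↑c + ↑t * I) * (Y : ℂ) ^ (↑c + ↑t * I) / (↑c + ↑t * I)

/-- `M_n(Y)`, the residue at `s = 1` of `(ζ'/ζ)^{(n)}(s) ζ(s) Y^s / s`,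
expressed via the Laurent coefficients `C j` of `ζ` and `A j` of `ζ'/ζ`
about `s = 1`. -/
noncomputable def Mterm (C A : ℕ → ℂ) (n : ℕ) (Y : ℝ) : ℂ :=
  (-1 : ℂ) ^ (n + 1) * (1 / ((n : ℂ) + 1)) * ((Y * Real.log Y ^ (n + 1) : ℝ) : ℂ)
  + (-1 : ℂ) ^ (n + 1) *
      ∑ k ∈ Finset.range (n + 1),
        (n.choose k : ℂ) * (-1 : ℂ) ^ k * (k.factorial : ℂ) *
          (-1 + ∑ j ∈ Finset.range (k + 1), (-1 : ℂ) ^ j * C j) *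
          ((Y * Real.log Y ^ (n - k) : ℝ) : ℂ)
  + (n.factorial : ℂ) * A n * ((Y : ℝ) : ℂ)


namespace Perron

/-- term of the series for `(s-1)ζ(s) - 1`. -/
noncomputable def bterm (n : ℕ) (s : ℂ) : ℂ :=
  (s - 1) * ((n : ℂ) + 1) ^ (-s) - ((n : ℂ) + 1) ^ (1 - s) + ((n : ℂ) + 2) ^ (1 - s)

lemma norm_nat_cpow (m : ℝ) (hm : 0 < m) (s : ℂ) : ‖(m : ℂ) ^ s‖ = m ^ s.re := by
  rw [Complex.norm_cpow_eq_rpow_re_of_pos hm]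

lemma cpow_sub_bound (m : ℝ) (hm : 1 ≤ m) (s : ℂ) (hs : 0 < s.re) (x : ℝ)
    (hx : x ∈ Set.Icc m (m + 1)) :
    ‖(x : ℂ) ^ (-s) - (m : ℂ) ^ (-s)‖ ≤ ‖s‖ * m ^ (-s.re - 1) := by
  have hm0 : 0 < m := by linarith
  have h := Convex.norm_image_sub_le_of_norm_hasDerivWithin_le (𝕜 := ℝ)
    (f := fun y : ℝ => (y : ℂ) ^ (-s)) (f' := fun y : ℝ => (-s) * (y : ℂ) ^ (-s - 1))
    (s := Set.Icc m (m + 1)) (C := ‖s‖ * m ^ (-s.re - 1)) (x := m) (y := x) ?_ ?_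
    (convex_Icc _ _) (by simp) hx
  · refine h.trans ?_
    have : ‖x - m‖ ≤ 1 := by
      rw [Real.norm_eq_abs, abs_le]; constructor <;> linarith [hx.1, hx.2]
    have h0 : 0 ≤ ‖s‖ * m ^ (-s.re - 1) := by positivity
    nlinarith
  · intro y hy
    have hy0 : 0 < y := by linarith [hy.1]
    have := (hasDerivAt_ofReal_cpow_const' (x := y) hy0.ne' (r := -s - 1) (by
      intro h
      have : (-s - 1).re = -1 := by rw [h]; simp
      simp at this
      linarith))
    have h2 : -s ≠ 0 := by
      intro h
      have : (-s).re = 0 := by rw [h]; simp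
      simp at this
      linarith
    have h3 := this.const_mul (-s)
    simp only [sub_add_cancel] at h3
    simp only [mul_div_cancel₀ _ h2] at h3
    exact h3.hasDerivWithinAt
  · intro y hy
    have hy0 : 0 < y := by linarith [hy.1]
    rw [norm_mul, norm_neg, norm_nat_cpow y hy0]
    gcongr
    simp only [sub_re, neg_re, one_re]
    exact Real.rpow_le_rpow_of_nonpos hm0 hy.1 (by linarith)

lemma bterm_bound (n : ℕ) (s : ℂ) (hs : 0 < s.re) :
    ‖bterm n s‖ ≤ ‖s - 1‖ * ‖s‖ * ((n : ℝ) + 1) ^ (-s.re - 1) := by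
  by_cases hs1 : s = 1
  · subst hs1
    simp [bterm]
  set m : ℝ := (n : ℝ) + 1 with hmdef
  have hm : 1 ≤ m := by simp [hmdef]
  have hm0 : 0 < m := by linarith
  have h := Convex.norm_image_sub_le_of_norm_hasDerivWithin_le (𝕜 := ℝ)
    (f := fun y : ℝ => (s - 1) * (m : ℂ) ^ (-s) * (y : ℂ) + (y : ℂ) ^ (1 - s))
    (f' := fun y : ℝ => (s - 1) * (m : ℂ) ^ (-s) * 1 + (1 - s) * (y : ℂ) ^ (-s))
    (s := Set.Icc m (m + 1)) (C := ‖s - 1‖ * ‖s‖ * m ^ (-s.re - 1)) (x := m) (y := m + 1) ?_ ?_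
    (convex_Icc _ _) (by simp) (by simp)
  · have e : bterm n s = (fun y : ℝ => (s - 1) * (m : ℂ) ^ (-s) * (y : ℂ) + (y : ℂ) ^ (1 - s)) (m+1)
        - (fun y : ℝ => (s - 1) * (m : ℂ) ^ (-s) * (y : ℂ) + (y : ℂ) ^ (1 - s)) m := by
      simp only [bterm, hmdef]
      push_cast
      rw [show (n : ℂ) + 1 + 1 = n + 2 by ring]
      ring
    rw [e]
    refine h.trans ?_
    simp
  · intro y hy
    have hy0 : 0 < y := by linarith [hy.1]
    have := (hasDerivAt_ofReal_cpow_const' (x := y) hy0.ne' (r := -s) (by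
      intro h
      apply hs1
      linear_combination -h))
    have h2 : 1 - s ≠ 0 := sub_ne_zero.mpr (Ne.symm hs1)
    have h3 := this.const_mul (1 - s)
    rw [show -s + 1 = 1 - s by ring] at h3
    have h4 : HasDerivAt (fun y : ℝ => (y : ℂ)) 1 y := ofRealCLM.hasDerivAt
    refine HasDerivAt.hasDerivWithinAt ?_
    simp only [mul_div_cancel₀ _ h2] at h3
    exact (h4.const_mul _).add h3
  · intro y hy
    rw [show (s - 1) * (m : ℂ) ^ (-s) * 1 + (1 - s) * (y : ℂ) ^ (-s) =
      (s - 1) * -((y : ℂ) ^ (-s) - (m : ℂ) ^ (-s)) by ring, norm_mul, norm_neg, mul_assoc]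
    gcongr
    exact cpow_sub_bound m hm s hs y hy

lemma bterm_differentiable (n : ℕ) : Differentiable ℂ (bterm n) := by
  have h1 : ((n : ℂ) + 1) ≠ 0 := by exact_mod_cast Nat.succ_ne_zero n
  have h2 : ((n : ℂ) + 2) ≠ 0 := by exact_mod_cast Nat.succ_ne_zero (n+1)
  unfold bterm
  intro s
  have e1 : DifferentiableAt ℂ (fun s : ℂ => ((n : ℂ) + 1) ^ (-s)) s :=
    (differentiableAt_id.neg).const_cpow (Or.inl h1)
  have e2 : DifferentiableAt ℂ (fun s : ℂ => ((n : ℂ) + 1) ^ (1 - s)) s :=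
    (differentiableAt_id.const_sub 1).const_cpow (Or.inl h1)
  have e3 : DifferentiableAt ℂ (fun s : ℂ => ((n : ℂ) + 2) ^ (1 - s)) s :=
    (differentiableAt_id.const_sub 1).const_cpow (Or.inl h2)
  fun_prop

lemma summable_aux (a : ℝ) (ha : 0 < a) : Summable (fun n : ℕ => ((n : ℝ) + 1) ^ (-a - 1)) := by
  have := (summable_nat_add_iff 1).mpr (Real.summable_nat_rpow.mpr (show -a - 1 < -1 by linarith))
  simpa using this

lemma sum_bterm (N : ℕ) (s : ℂ) : ∑ n ∈ range N, bterm n s =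
    (s - 1) * ∑ n ∈ range N, ((n : ℂ) + 1) ^ (-s) + ((N : ℂ) + 1) ^ (1 - s) - 1 := by
  induction N with
  | zero => simp
  | succ N ih =>
    rw [sum_range_succ, sum_range_succ, ih, bterm]
    push_cast
    rw [show (N : ℂ) + 1 + 1 = N + 2 by ring]
    ring

lemma zeta1_eq_of_one_lt (s : ℂ) (hs : 1 < s.re) :
    riemannZeta₁ s = 1 + ∑' n, bterm n s := by
  have hs1 : s ≠ 1 := by rintro rfl; simp at hs
  have hz : riemannZeta₁ s = (s - 1) * riemannZeta s := by
    rw [riemannZeta_eq_inv_sub_mul hs1, ← mul_assoc, mul_inv_cancel₀ (sub_ne_zero.mpr hs1), one_mul]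
  have hsum : Summable (fun n => bterm n s) := by
    refine Summable.of_norm_bounded ((summable_aux s.re (by linarith)).mul_left (‖s-1‖ * ‖s‖))
      (fun n => bterm_bound n s (by linarith))
  have h1 := hsum.hasSum.tendsto_sum_nat
  have hzs : Summable (fun n : ℕ => ((n : ℂ) + 1) ^ (-s)) := by
    have := (Complex.summable_one_div_nat_cpow (p := s)).mpr hs
    have := (summable_nat_add_iff 1).mpr this
    refine this.congr (fun n => ?_)
    push_cast
    rw [one_div, cpow_neg]
  have h2 := hzs.hasSum.tendsto_sum_nat
  have h3 : Filter.Tendsto (fun N : ℕ => ((N : ℂ) + 1) ^ (1 - s)) Filter.atTop (nhds 0) := by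
    rw [tendsto_zero_iff_norm_tendsto_zero]
    have : ∀ N : ℕ, ‖((N : ℂ) + 1) ^ (1 - s)‖ = ((N : ℝ) + 1) ^ (-(s.re - 1)) := by
      intro N
      have := norm_nat_cpow ((N:ℝ) + 1) (by positivity) (1 - s)
      push_cast at this
      rw [this]
      simp
    simp_rw [this]
    exact (tendsto_rpow_neg_atTop (by linarith)).comp
      (Filter.tendsto_atTop_add_const_right _ _ tendsto_natCast_atTop_atTop)
  have h4 := ((h2.const_mul (s - 1)).add h3).sub_const 1
  simp_rw [← sum_bterm] at h4
  have h5 := tendsto_nhds_unique h1 h4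
  rw [h5, hz, zeta_eq_tsum_one_div_nat_add_one_cpow hs]
  simp_rw [cpow_neg, one_div]
  ring

lemma zeta1_eq (s : ℂ) (hs : 0 < s.re) :
    riemannZeta₁ s = 1 + ∑' n, bterm n s := by
  have hopen : IsOpen {s : ℂ | 0 < s.re} := isOpen_lt continuous_const continuous_re
  have hd : DifferentiableOn ℂ (fun s => ∑' n, bterm n s) {s : ℂ | 0 < s.re} := by
    intro s hs
    apply DifferentiableAt.differentiableWithinAt
    simp only [Set.mem_ofPred_eq] at hs
    -- local open set
    set U : Set ℂ := {z : ℂ | s.re / 2 < z.re} ∩ Metric.ball s 1 with hU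
    have hUo : IsOpen U := (isOpen_lt continuous_const continuous_re).inter Metric.isOpen_ball
    have hsU : s ∈ U := ⟨by simp only [Set.mem_ofPred_eq]; linarith, by simp⟩
    have := differentiableOn_tsum_of_summable_norm (F := bterm) (U := U)
      (u := fun n => (‖s‖ + 2) * (‖s‖ + 1) * ((n : ℝ) + 1) ^ (-(s.re / 2) - 1))
      ((summable_aux (s.re/2) (by linarith)).mul_left _)
      (fun n => (bterm_differentiable n).differentiableOn) hUo ?_
    · exact this.differentiableAt (hUo.mem_nhds hsU)
    · intro n w hw
      have hw1 : s.re / 2 < w.re := hw.1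
      refine (bterm_bound n w (by linarith)).trans ?_
      have hw2 : ‖w - s‖ < 1 := by simpa [dist_eq_norm] using hw.2
      have a1 : ‖w‖ ≤ ‖s‖ + 1 := by
        have := norm_add_le (w - s) s
        simp only [sub_add_cancel] at this
        linarith
      have a2 : ‖w - 1‖ ≤ ‖s‖ + 2 := by
        have := norm_sub_le w 1
        simp only [norm_one] at this
        linarith
      have a3 : ((n : ℝ) + 1) ^ (-w.re - 1) ≤ ((n : ℝ) + 1) ^ (-(s.re / 2) - 1) := by
        apply Real.rpow_le_rpow_of_exponent_le
        · simp
        · linarith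
      gcongr
  have hpre : IsPreconnected {s : ℂ | 0 < s.re} := (convex_halfSpace_re_gt 0).isPreconnected
  have A1 : AnalyticOnNhd ℂ riemannZeta₁ {s : ℂ | 0 < s.re} :=
    differentiable_riemannZeta₁.differentiableOn.analyticOnNhd hopen
  have A2 : AnalyticOnNhd ℂ (fun s => 1 + ∑' n, bterm n s) {s : ℂ | 0 < s.re} :=
    (hd.const_add 1).analyticOnNhd hopen
  have := A1.eqOn_of_preconnected_of_eventuallyEq A2 hpre (z₀ := 2) (by simp) ?_
  · exact this hs
  · filter_upwards [(isOpen_lt continuous_const continuous_re).mem_nhds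
      (show (2 : ℂ) ∈ {s : ℂ | 1 < s.re} by simp)] with z hz
    exact zeta1_eq_of_one_lt z hz

lemma sqrt_step (n : ℕ) : ((n : ℝ) + 1 + 1) ^ (-(1/2 : ℝ) - 1) ≤
    2 / √((n : ℝ) + 1) - 2 / √((n : ℝ) + 2) := by
  have h1 : (0:ℝ) < (n:ℝ) + 1 := by positivity
  have h2 : (0:ℝ) < (n:ℝ) + 2 := by positivity
  set a := √((n : ℝ) + 1) with ha
  set b := √((n : ℝ) + 2) with hb
  have ha0 : 0 < a := Real.sqrt_pos.mpr h1
  have hb0 : 0 < b := Real.sqrt_pos.mpr h2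
  have ha2 : a ^ 2 = n + 1 := Real.sq_sqrt h1.le
  have hb2 : b ^ 2 = n + 2 := Real.sq_sqrt h2.le
  have hab : a ≤ b := Real.sqrt_le_sqrt (by linarith)
  have e : ((n : ℝ) + 1 + 1) ^ (-(1/2 : ℝ) - 1) = 1 / b ^ 3 := by
    rw [show (n:ℝ) + 1 + 1 = n + 2 by ring, hb, Real.sqrt_eq_rpow, ← Real.rpow_natCast,
      ← Real.rpow_mul h2.le, one_div ((n + 2 : ℝ) ^ _), ← Real.rpow_neg h2.le]
    norm_num
  rw [e, div_sub_div _ _ ha0.ne' hb0.ne', div_le_div_iff₀ (by positivity) (by positivity)]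
  have h3 : (b - a) * (b + a) = 1 := by nlinarith
  have h4 : 1 ≤ (b - a) * (2 * b) := by nlinarith
  nlinarith [mul_pos ha0 hb0, sq_nonneg b, mul_pos hb0 hb0, mul_le_mul_of_nonneg_right h4 (sq_nonneg b)]

lemma tail_sum (N : ℕ) (hN : 1 ≤ N) :
    ∑' n : ℕ, (((n + N : ℕ) : ℝ) + 1) ^ (-(1/2 : ℝ) - 1) ≤ 2 / √N := by
  have hs : Summable (fun n : ℕ => (((n + N : ℕ) : ℝ) + 1) ^ (-(1/2 : ℝ) - 1)) :=
    (summable_nat_add_iff N).mpr (summable_aux (1/2) (by norm_num))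
  refine hs.tsum_le_of_sum_range_le (fun M => ?_)
  have : ∀ M : ℕ, ∑ n ∈ range M, (((n + N : ℕ) : ℝ) + 1) ^ (-(1/2 : ℝ) - 1) ≤
      2 / √N - 2 / √((M + N : ℕ) : ℝ) := by
    intro M
    induction M with
    | zero => simp
    | succ M ih =>
      rw [sum_range_succ]
      have := sqrt_step (M + N - 1)
      have e : ((M + N - 1 : ℕ) : ℝ) = M + N - 1 := by
        rw [Nat.cast_sub (by omega)]; push_cast; ring
      rw [e] at this
      push_cast at ih ⊢
      rw [show (M : ℝ) + N - 1 + 1 = M + N by ring, show (M : ℝ) + N - 1 + 2 = M + 1 + N by ring]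
        at this
      linarith
  refine (this M).trans ?_
  have : 0 ≤ 2 / √((M + N : ℕ) : ℝ) := by positivity
  linarith

lemma sum_sqrt (N : ℕ) : ∑ n ∈ range N, ((n : ℝ) + 1) ^ (-(1/2 : ℝ)) ≤ 2 * √N := by
  induction N with
  | zero => simp
  | succ N ih =>
    rw [sum_range_succ]
    have h1 : (0:ℝ) < (N:ℝ) + 1 := by positivity
    push_cast
    set a := √(N : ℝ) with ha
    set b := √((N : ℝ) + 1) with hb
    have ha0 : 0 ≤ a := Real.sqrt_nonneg _
    have hb0 : 0 < b := Real.sqrt_pos.mpr h1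
    have ha2 : a ^ 2 = N := Real.sq_sqrt (by positivity)
    have hb2 : b ^ 2 = N + 1 := Real.sq_sqrt h1.le
    have hab : a ≤ b := Real.sqrt_le_sqrt (by linarith)
    have e : ((N : ℝ) + 1) ^ (-(1/2 : ℝ)) = 1 / b := by
      rw [Real.rpow_neg h1.le, hb, Real.sqrt_eq_rpow, one_div, one_div]
    rw [e]
    have : 1 / b ≤ 2 * b - 2 * a := by
      rw [div_le_iff₀ hb0]
      nlinarith
    linarith

lemma zeta1_bound_N (s : ℂ) (hs : 1/2 ≤ s.re) (N : ℕ) (hN : 1 ≤ N) :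
    ‖riemannZeta₁ s‖ ≤ ‖s - 1‖ * (2 * √N) + √((N : ℝ) + 1) + ‖s - 1‖ * ‖s‖ * (2 / √N) := by
  have hs0 : 0 < s.re := by linarith
  have hle : ∀ n : ℕ, ‖bterm n s‖ ≤ ‖s - 1‖ * ‖s‖ * ((n : ℝ) + 1) ^ (-(1/2 : ℝ) - 1) := by
    intro n
    refine (bterm_bound n s hs0).trans ?_
    gcongr
    · simp
  have hsum0 : Summable (fun n : ℕ => ‖s - 1‖ * ‖s‖ * ((n : ℝ) + 1) ^ (-(1/2 : ℝ) - 1)) :=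
    (summable_aux (1/2) (by norm_num)).mul_left _
  have hsum : Summable (fun n => bterm n s) := Summable.of_norm_bounded hsum0 hle
  rw [zeta1_eq s hs0, ← hsum.sum_add_tsum_nat_add N, sum_bterm]
  have e : (1 : ℂ) + ((s - 1) * ∑ n ∈ range N, ((n : ℂ) + 1) ^ (-s) + ((N : ℂ) + 1) ^ (1 - s) - 1
      + ∑' n, bterm (n + N) s) = (s - 1) * ∑ n ∈ range N, ((n : ℂ) + 1) ^ (-s) +
      ((N : ℂ) + 1) ^ (1 - s) + ∑' n, bterm (n + N) s := by ring
  rw [e]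
  refine (norm_add₃_le).trans ?_
  have i1 : ‖(s - 1) * ∑ n ∈ range N, ((n : ℂ) + 1) ^ (-s)‖ ≤ ‖s - 1‖ * (2 * √N) := by
    rw [norm_mul]
    gcongr
    refine (norm_sum_le _ _).trans (le_trans (sum_le_sum (fun n _ => ?_)) (sum_sqrt N))
    have := norm_nat_cpow ((n:ℝ) + 1) (by positivity) (-s)
    push_cast at this
    rw [this]
    apply Real.rpow_le_rpow_of_exponent_le
    · simp
    · simp; linarith
  have i2 : ‖((N : ℂ) + 1) ^ (1 - s)‖ ≤ √((N : ℝ) + 1) := by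
    have := norm_nat_cpow ((N:ℝ) + 1) (by positivity) (1 - s)
    push_cast at this
    rw [this, Real.sqrt_eq_rpow]
    apply Real.rpow_le_rpow_of_exponent_le
    · simp
    · simp; linarith
  have i3 : ‖∑' n, bterm (n + N) s‖ ≤ ‖s - 1‖ * ‖s‖ * (2 / √N) := by
    have hs2 := (summable_nat_add_iff N).mpr hsum0
    refine (tsum_of_norm_bounded hs2.hasSum (fun n => hle (n + N))).trans ?_
    rw [tsum_mul_left]
    gcongr
    exact tail_sum N hN
  linarith

/-- Growth of `(s-1) ζ(s)`. -/
lemma zeta1_bound (s : ℂ) (h1 : 1/2 ≤ s.re) (h2 : s.re ≤ 2) (ht : 1 ≤ |s.im|) :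
    ‖riemannZeta₁ s‖ ≤ ‖s - 1‖ * (12 * √|s.im|) := by
  set t := |s.im| with htd
  set N := ⌈t⌉₊ with hN
  have hNt : t ≤ N := Nat.le_ceil t
  have hN1 : 1 ≤ N := by
    have : (1:ℝ) ≤ N := ht.trans hNt
    exact_mod_cast this
  have hNt2 : (N : ℝ) ≤ 2 * t := by
    have := Nat.ceil_lt_add_one (show 0 ≤ t by linarith)
    linarith
  have hb := zeta1_bound_N s h1 N hN1
  have hs1 : t ≤ ‖s - 1‖ := by
    have := abs_im_le_norm (s - 1)
    simpa using this
  have hs2 : ‖s‖ ≤ 3 * t := by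
    refine (norm_le_abs_re_add_abs_im s).trans ?_
    rw [abs_of_nonneg (by linarith : 0 ≤ s.re)]
    linarith
  set r := √t with hr
  have hr2 : r ^ 2 = t := Real.sq_sqrt (by linarith)
  have hr1 : 1 ≤ r := by rw [hr]; exact Real.one_le_sqrt.mpr ht
  have j1 : √(N : ℝ) ≤ 3/2 * r := by
    rw [Real.sqrt_le_left (by positivity)]
    nlinarith
  have j2 : √((N : ℝ) + 1) ≤ 2 * r := by
    rw [Real.sqrt_le_left (by positivity)]
    nlinarith
  have j3 : r ≤ √(N : ℝ) := Real.sqrt_le_sqrt hNt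
  have j4 : ‖s‖ * (2 / √(N:ℝ)) ≤ 6 * r := by
    calc ‖s‖ * (2 / √(N:ℝ)) ≤ (3 * t) * (2 / r) := by gcongr
      _ = 6 * r := by rw [← hr2]; field_simp; ring
  have j5 : √((N : ℝ) + 1) ≤ ‖s - 1‖ * (2 * r) := by nlinarith
  have j6 : ‖s - 1‖ * (2 * √N) ≤ ‖s - 1‖ * (3 * r) :=
    mul_le_mul_of_nonneg_left (by linarith) (norm_nonneg _)
  have j7 : ‖s - 1‖ * ‖s‖ * (2 / √N) ≤ ‖s - 1‖ * (6 * r) := by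
    rw [mul_assoc]; gcongr
  have : 0 ≤ ‖s - 1‖ * r := by positivity
  nlinarith

lemma zeta1_bound_all : ∃ K : ℝ, 1 ≤ K ∧ ∀ s : ℂ, 1/2 ≤ s.re → s.re ≤ 2 →
    ‖riemannZeta₁ s‖ ≤ K * (|s.im| + 3) ^ 2 := by
  have hc : IsCompact (Set.Icc (1/2 : ℝ) 2 ×ℂ Set.Icc (-1 : ℝ) 1) :=
    isCompact_Icc.reProdIm isCompact_Icc
  obtain ⟨K, hK⟩ := hc.exists_bound_of_continuousOn differentiable_riemannZeta₁.continuous.continuousOn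
  refine ⟨max K 12, le_max_of_le_right (by norm_num), fun s h1 h2 => ?_⟩
  by_cases ht : 1 ≤ |s.im|
  · refine (zeta1_bound s h1 h2 ht).trans ?_
    have a1 : ‖s - 1‖ ≤ |s.im| + 3 := by
      refine (norm_le_abs_re_add_abs_im _).trans ?_
      have : |(s - 1).re| ≤ 1 := by
        rw [abs_le]; simp; constructor <;> linarith
      simp at this ⊢
      linarith
    have a2 : √|s.im| ≤ |s.im| + 3 := by
      rw [Real.sqrt_le_left (by positivity)]
      nlinarith
    calc ‖s - 1‖ * (12 * √|s.im|) ≤ (|s.im| + 3) * (12 * (|s.im| + 3)) := by gcongr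
      _ = 12 * (|s.im| + 3) ^ 2 := by ring
      _ ≤ _ := by gcongr; exact le_max_right _ _
  · push Not at ht
    have h := hK s (by
      rw [mem_reProdIm]
      exact ⟨⟨h1, h2⟩, abs_le.mp ht.le⟩)
    have : (1:ℝ) ≤ (|s.im| + 3) ^ 2 := by nlinarith [abs_nonneg s.im]
    have h12 : (0:ℝ) ≤ max K 12 := le_max_of_le_right (by norm_num)
    calc _ ≤ max K 12 := h.trans (le_max_left _ _)
      _ ≤ _ := by nlinarith

/-- lower bound for zeta on the line `17/16`. -/
lemma zeta1_lower : ∃ k : ℝ, 0 < k ∧ ∀ s : ℂ, s.re = 17/16 → k ≤ ‖riemannZeta₁ s‖ := by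
  have hsm : Summable (fun n : ℕ => (n : ℝ) ^ (-(17/16) : ℝ)) :=
    Real.summable_nat_rpow.mpr (by norm_num)
  set A := ∑' n : ℕ, (n : ℝ) ^ (-(17/16) : ℝ) with hA
  have hA0 : 0 ≤ A := tsum_nonneg (fun n => by positivity)
  refine ⟨1 / (16 * (A + 1)), by positivity, fun s hs => ?_⟩
  have hs1 : 1 < s.re := by rw [hs]; norm_num
  have hne : s ≠ 1 := by rintro rfl; simp at hs1
  have h := LSeries_one_mul_Lseries_moebius hs1
  rw [LSeries_one_eq_riemannZeta hs1] at h
  have hmu : ‖LSeries (fun n => ((ArithmeticFunction.moebius n : ℤ) : ℂ)) s‖ ≤ A := by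
    unfold LSeries
    refine tsum_of_norm_bounded hsm.hasSum (fun n => ?_)
    rcases Nat.eq_zero_or_pos n with rfl | hn
    · simp
    · rw [LSeries.term_of_ne_zero hn.ne', norm_div]
      have e := norm_nat_cpow n (by exact_mod_cast hn) s
      push_cast at e
      rw [e, hs, Real.rpow_neg (by positivity), div_eq_mul_inv]
      have : ‖((ArithmeticFunction.moebius n : ℤ) : ℂ)‖ ≤ 1 := by
        rw [norm_intCast]
        exact_mod_cast ArithmeticFunction.abs_moebius_le_one
      have h0 : (0:ℝ) ≤ ((n:ℝ) ^ (17/16 : ℝ))⁻¹ := by positivity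
      nlinarith
  have h1 : 1 ≤ ‖riemannZeta s‖ * A := by
    have := congrArg norm h
    rw [norm_mul, norm_one] at this
    rw [← this]
    gcongr
  have hz : riemannZeta₁ s = (s - 1) * riemannZeta s := by
    rw [riemannZeta_eq_inv_sub_mul hne, ← mul_assoc, mul_inv_cancel₀ (sub_ne_zero.mpr hne), one_mul]
  rw [hz, norm_mul]
  have h2 : 1/16 ≤ ‖s - 1‖ := by
    have := re_le_norm (s - 1)
    simp only [sub_re, one_re, hs] at this
    linarith
  have h3 : 1 / (A + 1) ≤ ‖riemannZeta s‖ := by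
    rw [div_le_iff₀ (by positivity)]
    nlinarith [norm_nonneg (riemannZeta s)]
  calc 1 / (16 * (A + 1)) = 1/16 * (1 / (A+1)) := by field_simp
    _ ≤ _ := by gcongr

end Perron


namespace Perron

lemma multiset_prod_norm_ge (S : Multiset ℂ) (z : ℂ) (a : ℝ) (ha : 0 ≤ a)
    (h : ∀ ρ ∈ S, a ≤ ‖z - ρ‖) : a ^ (Multiset.card S) ≤ ‖(S.map (fun ρ => z - ρ)).prod‖ := by
  induction S using Multiset.induction_on with
  | empty => simp
  | cons b S ih =>
    rw [Multiset.map_cons, Multiset.prod_cons, norm_mul, Multiset.card_cons, pow_succ, mul_comm]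
    have h1 := ih (fun ρ hρ => h ρ (Multiset.mem_cons_of_mem hρ))
    have h2 := h b (Multiset.mem_cons_self b S)
    gcongr

lemma multiset_prod_norm_le (S : Multiset ℂ) (z : ℂ) (a : ℝ) (ha : 0 ≤ a)
    (h : ∀ ρ ∈ S, ‖z - ρ‖ ≤ a) : ‖(S.map (fun ρ => z - ρ)).prod‖ ≤ a ^ (Multiset.card S) := by
  induction S using Multiset.induction_on with
  | empty => simp
  | cons b S ih =>
    rw [Multiset.map_cons, Multiset.prod_cons, norm_mul, Multiset.card_cons, pow_succ, mul_comm]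
    have h1 := ih (fun ρ hρ => h ρ (Multiset.mem_cons_of_mem hρ))
    have h2 := h b (Multiset.mem_cons_self b S)
    gcongr

lemma multiset_prod_differentiable (S : Multiset ℂ) :
    Differentiable ℂ (fun z => (S.map (fun ρ => z - ρ)).prod) := by
  induction S using Multiset.induction_on with
  | empty => simp
  | cons b S ih =>
    simp only [Multiset.map_cons, Multiset.prod_cons]
    fun_prop

lemma multiset_prod_logDeriv (S : Multiset ℂ) (z : ℂ)
    (h : (S.map (fun ρ => z - ρ)).prod ≠ 0) :
    deriv (fun z => (S.map (fun ρ => z - ρ)).prod) z / (S.map (fun ρ => z - ρ)).prod =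
      (S.map (fun ρ => 1 / (z - ρ))).sum := by
  induction S using Multiset.induction_on with
  | empty => simp
  | cons b S ih =>
    simp only [Multiset.map_cons, Multiset.prod_cons, Multiset.sum_cons] at h ⊢
    have h1 := left_ne_zero_of_mul h
    have h2 := right_ne_zero_of_mul h
    rw [← ih h2]
    have hd := multiset_prod_differentiable S z
    have : HasDerivAt (fun z : ℂ => (z - b) * (S.map (fun ρ => z - ρ)).prod)
        (1 * (S.map (fun ρ => z - ρ)).prod + (z - b) *
          deriv (fun z => (S.map (fun ρ => z - ρ)).prod) z) z :=
      ((hasDerivAt_id z).sub_const b).mul hd.hasDerivAt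
    rw [this.deriv]
    field_simp

/-- Quotient bound: for a factorization, `g` is bounded on the ball. -/
lemma factor_bound (f g : ℂ → ℂ) (hg : Differentiable ℂ g) (S : Multiset ℂ) (R B : ℝ) (hR : 0 < R)
    (hB : 0 ≤ B)
    (hS : ∀ ρ ∈ S, ‖ρ‖ ≤ R / 3) (hfg : ∀ z, f z = (S.map (fun ρ => z - ρ)).prod * g z)
    (hfB : ∀ z, ‖z‖ ≤ R → ‖f z‖ ≤ B) (z : ℂ) (hz : ‖z‖ ≤ R) :
    ‖g z‖ ≤ B / (2 * R / 3) ^ (Multiset.card S) := by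
  have hz' : z ∈ closure (Metric.ball (0:ℂ) R) := by
    rw [closure_ball _ hR.ne']; simpa using hz
  refine Complex.norm_le_of_forall_mem_frontier_norm_le Metric.isBounded_ball hg.diffContOnCl
    (fun w hw => ?_) hz'
  rw [frontier_ball _ hR.ne'] at hw
  have hw' : ‖w‖ = R := by simpa using hw
  have h1 := multiset_prod_norm_ge S w (2 * R / 3) (by positivity) (fun ρ hρ => by
    have := norm_sub_norm_le w ρ
    have := hS ρ hρ
    linarith)
  have h2 := hfB w hw'.le
  rw [hfg, norm_mul] at h2
  rw [le_div_iff₀ (by positivity)]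
  calc ‖g w‖ * (2 * R / 3) ^ (Multiset.card S) ≤ ‖g w‖ * ‖(S.map (fun ρ => w - ρ)).prod‖ := by gcongr
    _ ≤ B := by linarith [mul_comm (‖g w‖) ‖(S.map (fun ρ => w - ρ)).prod‖]

lemma factor_card (f g : ℂ → ℂ) (hg : Differentiable ℂ g) (S : Multiset ℂ) (R B : ℝ) (hR : 0 < R)
    (hB : 0 ≤ B)
    (hS : ∀ ρ ∈ S, ‖ρ‖ ≤ R / 3) (hfg : ∀ z, f z = (S.map (fun ρ => z - ρ)).prod * g z)
    (hfB : ∀ z, ‖z‖ ≤ R → ‖f z‖ ≤ B) : 2 ^ (Multiset.card S) * ‖f 0‖ ≤ B := by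
  have h1 := factor_bound f g hg S R B hR hB hS hfg hfB 0 (by simpa using hR.le)
  have h2 := multiset_prod_norm_le S 0 (R/3) (by positivity) (fun ρ hρ => by simpa using hS ρ hρ)
  rw [hfg, norm_mul]
  calc 2 ^ (Multiset.card S) * (‖(S.map (fun ρ => (0:ℂ) - ρ)).prod‖ * ‖g 0‖)
      ≤ 2 ^ (Multiset.card S) * ((R/3) ^ (Multiset.card S) * (B / (2 * R / 3) ^ (Multiset.card S))) := by
        gcongr
    _ = B := by
        rw [show 2 * R / 3 = 2 * (R / 3) by ring, mul_pow]
        field_simp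

lemma exists_factor (f : ℂ → ℂ) (hf : Differentiable ℂ f) (R B : ℝ) (hR : 0 < R) (hB : 0 ≤ B)
    (hf0 : f 0 ≠ 0) (hfB : ∀ z, ‖z‖ ≤ R → ‖f z‖ ≤ B) :
    ∃ (S : Multiset ℂ) (g : ℂ → ℂ), Differentiable ℂ g ∧ (∀ ρ ∈ S, ‖ρ‖ ≤ R / 3) ∧
      (∀ z, f z = (S.map (fun ρ => z - ρ)).prod * g z) ∧ ∀ z, ‖z‖ ≤ R / 3 → g z ≠ 0 := by
  classical
  let P : ℕ → Prop := fun k => ∃ (S : Multiset ℂ) (g : ℂ → ℂ), Multiset.card S = k ∧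
    Differentiable ℂ g ∧ (∀ ρ ∈ S, ‖ρ‖ ≤ R / 3) ∧
      (∀ z, f z = (S.map (fun ρ => z - ρ)).prod * g z)
  have hP0 : P 0 := ⟨0, f, by simp, hf, by simp, by simp⟩
  obtain ⟨m, hm⟩ := pow_unbounded_of_one_lt (B / ‖f 0‖) (one_lt_two)
  have hbd : ∀ k, P k → k ≤ m := by
    rintro k ⟨S, g, hk, hg, hS, hfg⟩
    have h := factor_card f g hg S R B hR hB hS hfg hfB
    rw [hk] at h
    have h3 : (2:ℝ) ^ k < 2 ^ m := by
      refine lt_of_le_of_lt ?_ hm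
      rw [le_div_iff₀ (norm_pos_iff.mpr hf0)]
      exact h
    exact ((pow_lt_pow_iff_right₀ one_lt_two).mp h3).le
  have hspec := Nat.findGreatest_spec (P := P) (Nat.zero_le m) hP0
  obtain ⟨S, g, hk, hg, hS, hfg⟩ := hspec
  refine ⟨S, g, hg, hS, hfg, fun z hz hgz => ?_⟩
  have hnew : P (Nat.findGreatest P m + 1) := by
    refine ⟨z ::ₘ S, dslope g z, by simp [hk], ?_, ?_, ?_⟩
    · intro w
      exact ((Complex.differentiableOn_dslope (c := z) Filter.univ_mem).mpr
        hg.differentiableOn).differentiableAt Filter.univ_mem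
    · intro ρ hρ
      rcases Multiset.mem_cons.mp hρ with rfl | h
      · exact hz
      · exact hS ρ h
    · intro w
      have h := sub_smul_dslope g z w
      rw [hgz, sub_zero, smul_eq_mul] at h
      rw [hfg, ← h, Multiset.map_cons, Multiset.prod_cons]
      ring
  have := Nat.le_findGreatest (hbd _ hnew) hnew
  omega

/-- Landau's lemma on the logarithmic derivative. -/
lemma landau (f : ℂ → ℂ) (hf : Differentiable ℂ f) (R B : ℝ) (hR : 0 < R) (hB : 0 < B)
    (hf0 : f 0 ≠ 0) (hfB : ∀ z, ‖z‖ ≤ R → ‖f z‖ ≤ B) (M : ℝ) (hM : 0 < M)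
    (hMB : Real.log (B / ‖f 0‖) ≤ M) :
    ∃ (S : Multiset ℂ), (∀ ρ ∈ S, f ρ = 0) ∧ (∀ ρ, ‖ρ‖ ≤ R / 3 → f ρ = 0 → ρ ∈ S) ∧
      (∀ ρ ∈ S, ‖ρ‖ ≤ R / 3) ∧
      (Multiset.card S : ℝ) * Real.log 2 ≤ M ∧
      ∀ z, ‖z‖ ≤ R / 6 → f z ≠ 0 →
        ‖deriv f z / f z - (S.map (fun ρ => 1 / (z - ρ))).sum‖ ≤ 72 * M / R := by
  obtain ⟨S, g, hg, hS, hfg, hgne⟩ := exists_factor f hf R B hR hB.le hf0 hfB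
  have hprod0 : ∀ z, (S.map (fun ρ => z - ρ)).prod = 0 ↔ z ∈ S := by
    intro z
    rw [Multiset.prod_eq_zero_iff, Multiset.mem_map]
    constructor
    · rintro ⟨a, ha, h⟩
      rw [sub_eq_zero] at h
      rwa [h]
    · intro h
      exact ⟨z, h, sub_self z⟩
  have hf0' : 0 < ‖f 0‖ := norm_pos_iff.mpr hf0
  have hcard := factor_card f g hg S R B hR hB.le hS hfg hfB
  refine ⟨S, fun ρ hρ => by rw [hfg, (hprod0 ρ).mpr hρ, zero_mul], fun ρ h1 h2 => ?_, hS, ?_, ?_⟩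
  · rw [hfg, mul_eq_zero] at h2
    exact (hprod0 ρ).mp (h2.resolve_right (hgne ρ h1))
  · refine le_trans ?_ hMB
    rw [← Real.log_pow]
    apply Real.log_le_log (by positivity)
    rw [le_div_iff₀ hf0']
    exact hcard
  -- the main bound
  have hg0 : g 0 ≠ 0 := hgne 0 (by simp; positivity)
  have hdiff : DifferentiableOn ℂ (fun z => deriv g z / g z) (Metric.ball 0 (R/3)) := by
    intro z hz
    have hz' : ‖z‖ ≤ R / 3 := by simpa using (Metric.mem_ball.mp hz).le
    exact ((hg.deriv z).div (hg z) (hgne z hz')).differentiableWithinAt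
  obtain ⟨h0, hh0⟩ := hdiff.isExactOn_ball
  set h : ℂ → ℂ := fun z => h0 z - h0 0 with hhdef
  have hh : ∀ z ∈ Metric.ball (0:ℂ) (R/3), HasDerivAt h (deriv g z / g z) z :=
    fun z hz => (hh0 z hz).sub_const _
  have hexp : ∀ z ∈ Metric.ball (0:ℂ) (R/3), g z = g 0 * exp (h z) := by
    have hc : ∀ z ∈ Metric.ball (0:ℂ) (R/3), HasDerivAt (fun z => g z * exp (- h z)) 0 z := by
      intro z hz
      have hz' : ‖z‖ ≤ R / 3 := by simpa using (Metric.mem_ball.mp hz).le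
      have := (hg z).hasDerivAt.mul ((hh z hz).neg.cexp)
      convert! this using 1
      field_simp [hgne z hz']
      ring
    intro z hz
    have := Convex.norm_image_sub_le_of_norm_hasDerivWithin_le (𝕜 := ℂ)
      (fun w hw => (hc w hw).hasDerivWithinAt) (C := 0) (by simp) (convex_ball (0:ℂ) (R/3))
      (Metric.mem_ball_self (by positivity)) hz
    simp only [zero_mul, norm_le_zero_iff, sub_eq_zero] at this
    have h00 : h 0 = 0 := by simp [hhdef]
    rw [h00, neg_zero, exp_zero, mul_one] at this
    rw [← this, mul_assoc, ← exp_add]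
    simp
  have hre : ∀ z ∈ Metric.ball (0:ℂ) (R/3), (h z).re ≤ M := by
    intro z hz
    have hz' : ‖z‖ ≤ R := by
      have : ‖z‖ < R / 3 := by simpa using hz
      linarith
    have b1 := factor_bound f g hg S R B hR hB.le hS hfg hfB z hz'
    have b2 := multiset_prod_norm_le S 0 (R/3) (by positivity) (fun ρ hρ => by simpa using hS ρ hρ)
    have b3 : ‖f 0‖ ≤ (R/3) ^ (Multiset.card S) * ‖g 0‖ := by
      rw [hfg, norm_mul]; gcongr
    have b4 : ‖g 0‖ * Real.exp ((h z).re) ≤ B / (2 * R / 3) ^ (Multiset.card S) := by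
      rw [hexp z hz, norm_mul, norm_exp] at b1
      exact b1
    refine le_trans ?_ hMB
    rw [← Real.log_exp (h z).re]
    apply Real.log_le_log (Real.exp_pos _)
    rw [le_div_iff₀ hf0']
    calc Real.exp (h z).re * ‖f 0‖ ≤ Real.exp (h z).re * ((R/3) ^ (Multiset.card S) * ‖g 0‖) := by
          gcongr
      _ = (R/3) ^ (Multiset.card S) * (‖g 0‖ * Real.exp ((h z).re)) := by ring
      _ ≤ (R/3) ^ (Multiset.card S) * (B / (2 * R / 3) ^ (Multiset.card S)) := by gcongr
      _ = B / 2 ^ (Multiset.card S) := by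
        rw [show 2 * R / 3 = 2 * (R / 3) by ring, mul_pow]
        field_simp
      _ ≤ B := by
        apply div_le_self hB.le
        exact one_le_pow₀ (by norm_num)
  have hhd : DifferentiableOn ℂ h (Metric.ball 0 (R/3)) :=
    fun z hz => (hh z hz).differentiableAt.differentiableWithinAt
  have hbc : ∀ z, ‖z‖ ≤ R / 4 → ‖h z‖ ≤ 6 * M := by
    intro z hz
    have hz2 : z ∈ Metric.ball (0:ℂ) (R/3) := by
      simp; linarith
    have := Complex.borelCaratheodory_zero hM hhd (fun w hw => hre w hw) (by positivity) hz2
      (by simp [hhdef])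
    refine this.trans ?_
    rw [div_le_iff₀ (by linarith)]
    nlinarith
  intro z hz hfz
  have hz3 : z ∈ Metric.ball (0:ℂ) (R/3) := by simp; linarith
  have hcauchy : ‖deriv h z‖ ≤ 6 * M / (R / 12) := by
    refine Complex.norm_deriv_le_of_forall_mem_sphere_norm_le (by positivity) ?_ ?_
    · refine (hhd.mono ?_).diffContOnCl
      rw [closure_ball _ (by positivity)]
      intro w hw
      have h1 : ‖w - z‖ ≤ R / 12 := by simpa [dist_eq_norm] using hw
      have h2 := norm_add_le (w - z) z
      simp only [sub_add_cancel] at h2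
      simp
      linarith
    · intro w hw
      have h1 : ‖w - z‖ = R / 12 := by simpa [dist_eq_norm] using hw
      have h2 := norm_add_le (w - z) z
      simp only [sub_add_cancel] at h2
      apply hbc
      linarith
  rw [(hh z hz3).deriv] at hcauchy
  have hpz : (S.map (fun ρ => z - ρ)).prod ≠ 0 := by
    intro h; apply hfz; rw [hfg, h, zero_mul]
  have hgz : g z ≠ 0 := by
    intro h; apply hfz; rw [hfg, h, mul_zero]
  have hlog : deriv f z / f z = (S.map (fun ρ => 1 / (z - ρ))).sum + deriv g z / g z := by
    rw [← multiset_prod_logDeriv S z hpz]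
    have := ((multiset_prod_differentiable S z).hasDerivAt).mul (hg z).hasDerivAt
    have hd := (this.congr_of_eventuallyEq (Filter.Eventually.of_forall hfg)).deriv
    rw [hd, hfg z]
    field_simp
  rw [hlog, add_sub_cancel_left]
  refine hcauchy.trans (le_of_eq ?_)
  field_simp
  ring

end Perron


namespace Perron

/-- logarithmic height -/
noncomputable def LL (t : ℝ) : ℝ := Real.log (|t| + 3)

lemma one_le_LL (t : ℝ) : 1 ≤ LL t := by
  unfold LL
  rw [Real.le_log_iff_exp_le (by positivity)]
  have := Real.exp_one_lt_d9
  have := abs_nonneg t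
  linarith

lemma LL_le_two_mul {t u : ℝ} (h : |u| + 3 ≤ (|t| + 3) ^ 2) : LL u ≤ 2 * LL t := by
  unfold LL
  have : 2 * Real.log (|t| + 3) = Real.log ((|t| + 3)^2) := by
    rw [Real.log_pow]; norm_num
  rw [this]
  exact Real.log_le_log (by positivity) h

lemma zeta1_one : riemannZeta₁ 1 = 1 := by simp [riemannZeta₁]

lemma zeta1_ne_zero {s : ℂ} (hs : 1 ≤ s.re) : riemannZeta₁ s ≠ 0 := by
  by_cases h : s = 1
  · rw [h, zeta1_one]; exact one_ne_zero
  · intro h0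
    have := riemannZeta_eq_inv_sub_mul h
    rw [h0, mul_zero] at this
    exact riemannZeta_ne_zero_of_one_le_re hs this

lemma landau_zeta : ∃ C : ℝ, 1 ≤ C ∧ ∀ t : ℝ, ∃ S : Multiset ℂ,
    (∀ ρ ∈ S, riemannZeta₁ ρ = 0) ∧
    (∀ ρ : ℂ, ‖ρ - (17/16 + t * I)‖ ≤ 1/6 → riemannZeta₁ ρ = 0 → ρ ∈ S) ∧
    (∀ ρ ∈ S, ‖ρ - (17/16 + t * I)‖ ≤ 1/6) ∧
    (Multiset.card S : ℝ) ≤ C * LL t ∧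
    ∀ z : ℂ, ‖z - (17/16 + t * I)‖ ≤ 1/12 → riemannZeta₁ z ≠ 0 →
      ‖deriv riemannZeta₁ z / riemannZeta₁ z - (S.map (fun ρ => 1/(z-ρ))).sum‖ ≤ C * LL t := by
  obtain ⟨K, hK1, hK⟩ := zeta1_bound_all
  obtain ⟨k, hk0, hk⟩ := zeta1_lower
  set M0 : ℝ := |Real.log (K / k)| + 4 with hM0
  have hM0p : 4 ≤ M0 := by have := abs_nonneg (Real.log (K/k)); linarith
  refine ⟨144 * M0, by linarith, ?_⟩
  intro t
  set s0 : ℂ := 17/16 + t * I with hs0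
  have hs0re : s0.re = 17/16 := by simp [hs0]
  have hs0im : s0.im = t := by simp [hs0]
  have hL := one_le_LL t
  have hta := abs_nonneg t
  have hf0n : k ≤ ‖riemannZeta₁ s0‖ := hk s0 hs0re
  obtain ⟨S, h1, h2, h3, h4, h5⟩ := landau (fun w => riemannZeta₁ (w + s0))
    (differentiable_riemannZeta₁.comp (differentiable_id.add_const s0)) (1/2)
    (K * (|t| + 4)^2) (by norm_num) (by positivity)
    (by rw [← norm_pos_iff]; simp only [zero_add]; linarith)
    (by
      intro z hz
      have hre := (abs_re_le_norm z).trans hz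
      have him := (abs_im_le_norm z).trans hz
      have hre' := abs_le.1 hre
      have e := hK (z + s0) (by simp [hs0re]; linarith) (by simp [hs0re]; linarith)
      refine e.trans ?_
      have : |(z + s0).im| ≤ |t| + 1/2 := by
        rw [add_im, hs0im]
        have := abs_add_le z.im t
        linarith
      have h3 := abs_nonneg (z+s0).im
      gcongr ?_ * ?_ ^ 2
      linarith) (M0 * LL t) (by positivity)
    (by
      simp only [zero_add]
      have e1 : Real.log (K * (|t|+4)^2 / ‖riemannZeta₁ s0‖) ≤ Real.log ((K / k) * (|t|+4)^2) := by
        apply Real.log_le_log (by have := hk0.trans_le hf0n; positivity)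
        rw [div_mul_eq_mul_div]
        gcongr
      have e2 : Real.log ((K / k) * (|t|+4)^2) = Real.log (K/k) + 2 * Real.log (|t|+4) := by
        rw [Real.log_mul (by positivity) (by positivity), Real.log_pow]; norm_num
      have e3 : Real.log (|t|+4) ≤ 2 * LL t := by
        have := LL_le_two_mul (t := t) (u := |t|+1) (by rw [abs_of_nonneg (by positivity)]; nlinarith)
        unfold LL at this ⊢
        rw [abs_of_nonneg (by positivity)] at this
        convert this using 2
        ring
      have e4 := le_abs_self (Real.log (K/k))
      have e5 : |Real.log (K/k)| ≤ |Real.log (K/k)| * LL t :=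
        le_mul_of_one_le_right (abs_nonneg _) hL
      rw [hM0]
      linarith)
  refine ⟨S.map (fun w => w + s0), ?_, ?_, ?_, ?_, ?_⟩
  · intro ρ hρ
    obtain ⟨w, hw, rfl⟩ := Multiset.mem_map.1 hρ
    exact h1 w hw
  · intro ρ hρ h0
    refine Multiset.mem_map.2 ⟨ρ - s0, h2 _ ?_ ?_, by ring⟩
    · linarith
    · simpa using h0
  · intro ρ hρ
    obtain ⟨w, hw, rfl⟩ := Multiset.mem_map.1 hρ
    have := h3 w hw
    simp only [add_sub_cancel_right]
    linarith
  · rw [Multiset.card_map]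
    have hl2 : (1/2 : ℝ) ≤ Real.log 2 := by have := Real.log_two_gt_d9; linarith
    have : (Multiset.card S : ℝ) * (1/2) ≤ (Multiset.card S : ℝ) * Real.log 2 := by gcongr
    have : 0 ≤ M0 * LL t := by positivity
    linarith
  · intro z hz h0
    have := h5 (z - s0) (by linarith) (by simpa using h0)
    rw [deriv_comp_add_const] at this
    simp only [sub_add_cancel] at this
    rw [Multiset.map_map]
    have e : (Multiset.map ((fun ρ => 1 / (z - ρ)) ∘ fun w => w + s0) S)
        = Multiset.map (fun ρ => 1 / (z - s0 - ρ)) S := by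
      apply Multiset.map_congr rfl
      intro x _
      simp only [Function.comp]
      congr 1
      ring
    rw [e]
    refine this.trans (le_of_eq ?_)
    ring

lemma multiset_re_sum_nonneg (S : Multiset ℂ) (h : ∀ x ∈ S, 0 ≤ x.re) : 0 ≤ S.sum.re := by
  induction S using Multiset.induction_on with
  | empty => simp
  | cons b S ih =>
    rw [Multiset.sum_cons, add_re]
    have := ih (fun x hx => h x (Multiset.mem_cons_of_mem hx))
    have := h b (Multiset.mem_cons_self b S)
    linarith

lemma multiset_re_sum_ge (S : Multiset ℂ) (h : ∀ x ∈ S, 0 ≤ x.re) (y : ℂ) (hy : y ∈ S) :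
    y.re ≤ S.sum.re := by
  obtain ⟨T, rfl⟩ := Multiset.exists_cons_of_mem hy
  rw [Multiset.sum_cons, add_re]
  have := multiset_re_sum_nonneg T (fun x hx => h x (Multiset.mem_cons_of_mem hx))
  linarith

lemma zeta1_zero_re {s : ℂ} (h : riemannZeta₁ s = 0) : s.re < 1 := by
  by_contra! h1
  exact zeta1_ne_zero h1 h

lemma re_logDeriv_lower : ∃ C : ℝ, 1 ≤ C ∧ ∀ t δ : ℝ, 0 < δ → δ ≤ 1/16 →
    (-(C * LL t) ≤ (deriv riemannZeta₁ (1 + δ + t * I) / riemannZeta₁ (1 + δ + t * I)).re) ∧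
    ∀ β : ℝ, 1 - 1/16 ≤ β → riemannZeta₁ (β + t * I) = 0 →
      1 / (1 + δ - β) - C * LL t ≤
        (deriv riemannZeta₁ (1 + δ + t * I) / riemannZeta₁ (1 + δ + t * I)).re := by
  obtain ⟨C, hC, h⟩ := landau_zeta
  refine ⟨C, hC, ?_⟩
  intro t δ hδ hδ2
  obtain ⟨S, h1, h2, h3, h4, h5⟩ := h t
  set z : ℂ := 1 + δ + t * I with hz
  have hzre : z.re = 1 + δ := by simp [hz]
  have hzn : riemannZeta₁ z ≠ 0 := zeta1_ne_zero (by linarith)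
  have e := h5 z (by
    have : z - (17/16 + t * I) = ((δ - 1/16 : ℝ) : ℂ) := by rw [hz]; push_cast; ring
    rw [this, norm_real, Real.norm_eq_abs, abs_le]
    constructor <;> linarith) hzn
  have e2 := (abs_re_le_norm _).trans e
  rw [sub_re] at e2
  have e3 := (abs_le.1 e2).1
  have hnn : ∀ x ∈ S.map (fun ρ => 1/(z-ρ)), 0 ≤ x.re := by
    intro x hx
    obtain ⟨ρ, hρ, rfl⟩ := Multiset.mem_map.1 hx
    have := zeta1_zero_re (h1 ρ hρ)
    rw [one_div, inv_re]
    apply div_nonneg _ (normSq_nonneg _)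
    rw [sub_re]; linarith
  constructor
  · have := multiset_re_sum_nonneg _ hnn
    linarith
  · intro β hβ h0
    have hβ1 : β < 1 := by simpa using zeta1_zero_re h0
    have hm : (β + t * I : ℂ) ∈ S := by
      apply h2 _ _ h0
      have : (β + t * I : ℂ) - (17/16 + t * I) = ((β - 17/16 : ℝ) : ℂ) := by push_cast; ring
      rw [this, norm_real, Real.norm_eq_abs, abs_le]
      constructor <;> linarith
    have := multiset_re_sum_ge _ hnn _ (Multiset.mem_map.2 ⟨_, hm, rfl⟩)
    have e4 : (1 / (z - (β + t * I))).re = 1 / (1 + δ - β) := by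
      have : z - (β + t * I) = ((1 + δ - β : ℝ) : ℂ) := by rw [hz]; push_cast; ring
      rw [this, ← ofReal_one, ← ofReal_div, ofReal_re]
    rw [e4] at this
    linarith

lemma logDeriv_zeta {s : ℂ} (hs : s ≠ 1) (h0 : riemannZeta₁ s ≠ 0) :
    deriv riemannZeta s / riemannZeta s
      = -1 / (s - 1) + deriv riemannZeta₁ s / riemannZeta₁ s := by
  have hs' : s - 1 ≠ 0 := sub_ne_zero.2 hs
  have hev : riemannZeta =ᶠ[nhds s] fun z => (z - 1)⁻¹ * riemannZeta₁ z := by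
    filter_upwards [isOpen_ne.mem_nhds hs] with z hz
    rw [riemannZeta_eq_inv_sub_mul hz]
  have hd := ((((hasDerivAt_id s).sub_const 1).inv hs').mul
    (differentiable_riemannZeta₁ s).hasDerivAt).congr_of_eventuallyEq hev
  rw [hd.deriv, riemannZeta_eq_inv_sub_mul hs]
  simp only [id, Pi.inv_apply]
  field_simp

lemma three_four_one (σ t : ℝ) (hσ : 1 < σ) :
    (3 * (deriv riemannZeta σ / riemannZeta σ) +
      4 * (deriv riemannZeta (σ + t * I) / riemannZeta (σ + t * I)) +
      (deriv riemannZeta (σ + (2 * t : ℝ) * I) / riemannZeta (σ + (2 * t : ℝ) * I))).re ≤ 0 := by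
  have key : ∀ s : ℂ, 1 < s.re → HasSum (fun m : ℕ => LSeries.term
      (fun k => (ArithmeticFunction.vonMangoldt k : ℂ)) s m)
      (-(deriv riemannZeta s / riemannZeta s)) := by
    intro s hs
    have h := ArithmeticFunction.LSeriesSummable_vonMangoldt hs
    have := h.LSeriesHasSum
    rw [ArithmeticFunction.LSeries_vonMangoldt_eq_deriv_riemannZeta_div hs, neg_div] at this
    exact this
  have h1 := key σ (by simpa)
  have h2 := key (σ + t * I) (by simpa)
  have h3 := key (σ + (2 * t : ℝ) * I) (by simpa)
  have h := ((h1.mul_left 3).add (h2.mul_left 4)).add h3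
  have hre := Complex.hasSum_re h
  have hnn := hre.nonneg (fun m => ?_)
  · have e : (3 * -(deriv riemannZeta σ / riemannZeta σ) +
      4 * -(deriv riemannZeta (σ + t * I) / riemannZeta (σ + t * I)) +
      -(deriv riemannZeta (σ + (2 * t : ℝ) * I) / riemannZeta (σ + (2 * t : ℝ) * I))) =
      -(3 * (deriv riemannZeta σ / riemannZeta σ) +
      4 * (deriv riemannZeta (σ + t * I) / riemannZeta (σ + t * I)) +
      (deriv riemannZeta (σ + (2 * t : ℝ) * I) / riemannZeta (σ + (2 * t : ℝ) * I))) := by ring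
    rw [e, neg_re] at hnn
    linarith
  · rcases Nat.eq_zero_or_pos m with rfl | hm
    · simp
    · have hm0 : m ≠ 0 := hm.ne'
      have hmc : (m : ℂ) ≠ 0 := by exact_mod_cast hm0
      simp only [LSeries.term_of_ne_zero hm0]
      set a : ℂ := (m : ℂ) ^ (-(t * I)) with ha
      have han : ‖a‖ = 1 := by
        rw [ha]
        have := norm_nat_cpow (m : ℝ) (by positivity) (-(t * I))
        rw [show ((m : ℝ) : ℂ) = m by push_cast; rfl] at this
        rw [this]; simp
      have hb : ((m : ℂ) ^ (σ : ℂ)) = (((m : ℝ) ^ σ : ℝ) : ℂ) := by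
        rw [ofReal_cpow (by positivity)]; push_cast; rfl
      have e2 : (m : ℂ) ^ ((σ : ℂ) + t * I) = (m : ℂ) ^ (σ : ℂ) * a⁻¹ := by
        rw [cpow_add _ _ hmc, ha, cpow_neg, inv_inv]
      have e3 : (m : ℂ) ^ ((σ : ℂ) + (2 * t : ℝ) * I) = (m : ℂ) ^ (σ : ℂ) * (a⁻¹)^2 := by
        rw [cpow_add _ _ hmc, ha, cpow_neg, inv_inv, ← cpow_nat_mul]
        push_cast; ring_nf
      have ha0 : a ≠ 0 := by rw [← norm_pos_iff, han]; exact one_pos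
      rw [e2, e3, hb]
      set b : ℝ := (m : ℝ) ^ σ
      have hbp : 0 < b := by positivity
      set v : ℝ := ArithmeticFunction.vonMangoldt m
      have hv : 0 ≤ v := ArithmeticFunction.vonMangoldt_nonneg
      have e4 : 3 * ((v : ℂ) / (b : ℂ)) + 4 * ((v : ℂ) / ((b : ℂ) * a⁻¹)) +
          (v : ℂ) / ((b : ℂ) * a⁻¹ ^ 2) = ((v / b : ℝ) : ℂ) * (3 + 4 * a + a ^ 2) := by
        push_cast
        field_simp
      rw [e4, re_ofReal_mul]
      apply mul_nonneg (by positivity)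
      have hns : a.re ^ 2 + a.im ^ 2 = 1 := by
        have := Complex.sq_norm a
        rw [han, normSq_apply] at this
        nlinarith
      simp [pow_two]
      nlinarith [sq_nonneg (a.re + 1)]

lemma zero_free_low : ∃ η : ℝ, 0 < η ∧ ∀ s : ℂ, |s.im| ≤ 1 → riemannZeta₁ s = 0 → s.re ≤ 1 - η := by
  set Q : Set ℂ := ((Set.Icc (1/2 : ℝ) 1) ×ℂ (Set.Icc (-1 : ℝ) 1)) ∩ {s | riemannZeta₁ s = 0} with hQ
  have hQc : IsCompact Q := by
    apply IsCompact.inter_right (isCompact_Icc.reProdIm isCompact_Icc)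
    exact isClosed_eq differentiable_riemannZeta₁.continuous continuous_const
  rcases Q.eq_empty_or_nonempty with he | hne
  · refine ⟨1/2, by norm_num, ?_⟩
    intro s hs h0
    by_contra! hc
    have : s ∈ Q := by
      refine ⟨?_, h0⟩
      rw [mem_reProdIm]
      exact ⟨⟨by linarith, (zeta1_zero_re h0).le⟩, abs_le.1 hs⟩
    rw [he] at this
    exact this
  · obtain ⟨r, hr, hmax⟩ := hQc.exists_isMaxOn hne continuous_re.continuousOn
    have hr1 := zeta1_zero_re hr.2
    have hr2 := (mem_reProdIm.1 hr.1).1.1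
    refine ⟨1 - r.re, by linarith, ?_⟩
    intro s hs h0
    by_contra! hc
    have : s ∈ Q := by
      refine ⟨?_, h0⟩
      rw [mem_reProdIm]
      exact ⟨⟨by linarith, (zeta1_zero_re h0).le⟩, abs_le.1 hs⟩
    have := hmax this
    simp only [Set.mem_ofPred_eq] at this
    linarith

set_option maxHeartbeats 1000000 in
lemma zero_free : ∃ c : ℝ, 0 < c ∧ c ≤ 1/16 ∧ ∀ s : ℂ, riemannZeta₁ s = 0 →
    s.re ≤ 1 - c / LL s.im := by
  obtain ⟨η, hη, hlow⟩ := zero_free_low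
  obtain ⟨C, hC, hmain⟩ := re_logDeriv_lower
  set D : ℝ := 12 * C + 12 with hD
  set a : ℝ := 1 / (2 * D) with ha
  have hDp : 0 < D := by positivity
  have hap : 0 < a := by positivity
  have haD : a * D = 1/2 := by rw [ha]; field_simp
  have ha16 : a ≤ 1/16 := by nlinarith
  refine ⟨min (a/7) (min η (1/16)), by positivity, (min_le_right _ _).trans (min_le_right _ _), ?_⟩
  intro s h0
  set t := s.im with ht
  have hL := one_le_LL t
  have hcL : ∀ c : ℝ, 0 ≤ c → c / LL t ≤ c := fun c hc => div_le_self hc hL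
  have hmin : min (a/7) (min η (1/16)) / LL t ≤ min (a/7) (min η (1/16)) := hcL _ (by positivity)
  have hmin1 := min_le_left (a/7) (min η (1/16))
  have hmin2 := (min_le_right (a/7) (min η (1/16))).trans (min_le_left _ _)
  have hmin3 := (min_le_right (a/7) (min η (1/16))).trans (min_le_right _ _)
  rcases le_total (|t|) 1 with h1 | h1
  · have := hlow s h1 h0
    linarith
  rcases le_total s.re (1 - 1/16) with h2 | h2
  · linarith
  set β := s.re with hβ
  have hs : s = (β : ℂ) + t * I := (re_add_im s).symm
  rw [hs] at h0
  have hβ1 : β < 1 := by simpa using zeta1_zero_re h0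
  set δ := a / LL t with hδ
  have hδp : 0 < δ := by positivity
  have hδ16 : δ ≤ 1/16 := (hcL a hap.le).trans ha16
  have i1 := (hmain 0 δ hδp hδ16).1
  have i2 := (hmain t δ hδp hδ16).2 β h2 h0
  have i3 := (hmain (2*t) δ hδp hδ16).1
  have hL0 : LL 0 ≤ LL t := by
    unfold LL
    apply Real.log_le_log (by simp)
    simp
  have hL2 : LL (2*t) ≤ 2 * LL t := by
    apply LL_le_two_mul
    rw [abs_mul, abs_two]
    nlinarith [abs_nonneg t]
  have h341 := three_four_one (1+δ) t (by linarith)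
  have t2 : 1 ≤ t ^ 2 := by rw [← sq_abs]; nlinarith
  have g1 := logDeriv_zeta (s := 1 + δ + (0:ℝ) * I)
    (by intro h; have := congrArg re h; simp at this; linarith) (zeta1_ne_zero (by simp; linarith))
  have g2 := logDeriv_zeta (s := 1 + δ + t * I)
    (by intro h; have := congrArg re h; simp at this; linarith) (zeta1_ne_zero (by simp; linarith))
  have g3 := logDeriv_zeta (s := 1 + δ + (2 * t : ℝ) * I)
    (by intro h; have := congrArg re h; simp at this; linarith) (zeta1_ne_zero (by simp; linarith))
  have p1 : (-1 / ((1 + δ + (0:ℝ) * I : ℂ) - 1)).re = - (1/δ) := by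
    have : (-1 / ((1 + δ + (0:ℝ) * I : ℂ) - 1)) = ((-(1/δ) : ℝ) : ℂ) := by
      push_cast; simp; rw [neg_div, one_div]
    rw [this, ofReal_re]
  have p : ∀ u : ℝ, 1 ≤ u ^ 2 → -δ ≤ (-1 / ((1 + δ + u * I : ℂ) - 1)).re := by
    intro u hu
    rw [neg_div, neg_re, one_div, inv_re, normSq_apply]
    simp
    rw [div_le_iff₀ (by nlinarith)]
    nlinarith [sq_nonneg δ, mul_nonneg hδp.le (sub_nonneg.2 hu), mul_pos hδp (mul_pos hδp hδp)]
  have p2 := p t t2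
  have p3 := p (2*t) (by nlinarith)
  have hsum : (((1 + δ : ℝ) : ℂ)) = 1 + δ + (0:ℝ) * I := by push_cast; simp
  rw [hsum, g1] at h341
  rw [show (1 + δ + (0:ℝ) * I + t * I : ℂ) = 1 + δ + t * I by simp, g2,
    show (1 + δ + (0:ℝ) * I + (2 * t : ℝ) * I : ℂ) = 1 + δ + (2 * t : ℝ) * I by simp, g3] at h341
  simp only [add_re, mul_re, re_ofNat, im_ofNat, zero_mul, sub_zero] at h341 p1 p2 p3
  have hx : 4 * (1 / (1 + δ - β)) ≤ 3 * (1/δ) + 5 * δ + 9 * C * LL t := by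
    have k1 : C * LL 0 ≤ C * LL t := by gcongr
    have k2 : C * LL (2 * t) ≤ C * (2 * LL t) := by gcongr
    linarith
  have hy : 3 * (1/δ) + 5 * δ + 9 * C * LL t ≤ (7/2) / δ := by
    have : (1/2)/δ = D * LL t := by
      rw [hδ, div_div_eq_mul_div, div_eq_iff hap.ne']
      linear_combination (-(LL t)) * haD
    have : (7/2)/δ = 3 * (1/δ) + (1/2)/δ := by ring
    nlinarith
  have hpos : 0 < 1 + δ - β := by linarith
  have hz : 4 * δ ≤ (7/2) * (1 + δ - β) := by
    have := hx.trans hy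
    rw [mul_one_div, div_le_div_iff₀ hpos hδp] at this
    exact this
  have : min (a/7) (min η (1/16)) / LL t ≤ δ / 7 := by
    have q1 : min (a/7) (min η (1/16)) / LL t ≤ (a / 7) / LL t :=
      div_le_div_of_nonneg_right hmin1 (by linarith)
    have q2 : (a / 7) / LL t = δ / 7 := div_right_comm _ _ _
    linarith
  linarith

/-- main bound for the logarithmic derivative -/
lemma logDeriv_bound : ∃ c C : ℝ, 0 < c ∧ c ≤ 1/48 ∧ 1 ≤ C ∧ ∀ s : ℂ,
    1 - c / LL s.im ≤ s.re → s.re ≤ 17/16 + 1/12 →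
    riemannZeta₁ s ≠ 0 ∧ ‖deriv riemannZeta₁ s / riemannZeta₁ s‖ ≤ C * LL s.im ^ 2 := by
  obtain ⟨c, hc, hc16, hz⟩ := zero_free
  obtain ⟨C, hC, hl⟩ := landau_zeta
  refine ⟨c / 4, C + 4 * C / c, by positivity, by linarith, by
    have : 0 ≤ 4 * C / c := by positivity
    linarith, ?_⟩
  intro s hs1 hs2
  have hL := one_le_LL s.im
  have hdL : c / 4 / LL s.im ≤ c / 4 := div_le_self (by positivity) hL
  have hs0 : riemannZeta₁ s ≠ 0 := by
    intro h0
    have := hz s h0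
    have : c / 4 / LL s.im < c / LL s.im := by
      gcongr; linarith
    linarith
  refine ⟨hs0, ?_⟩
  obtain ⟨S, h1, h2, h3, h4, h5⟩ := hl s.im
  have e := h5 s (by
    have : s - (17/16 + s.im * I) = ((s.re - 17/16 : ℝ) : ℂ) := by
      apply Complex.ext <;> simp
    rw [this, norm_real, Real.norm_eq_abs, abs_le]
    constructor <;> linarith) hs0
  have hsum : ‖(S.map (fun ρ => 1/(s-ρ))).sum‖ ≤ C * LL s.im * (4 * LL s.im / c) := by
    refine (norm_multiset_sum_le _).trans ?_
    rw [Multiset.map_map]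
    have := Multiset.sum_le_card_nsmul (Multiset.map (norm ∘ fun ρ => 1 / (s - ρ)) S)
      (4 * LL s.im / c) (by
        intro x hx
        obtain ⟨ρ, hρ, rfl⟩ := Multiset.mem_map.1 hx
        simp only [Function.comp, norm_div, norm_one]
        have hρz := hz ρ (h1 ρ hρ)
        have him : |ρ.im| ≤ |s.im| + 1/6 := by
          have q := (abs_im_le_norm _).trans (h3 ρ hρ)
          simp at q
          have := abs_add_le (ρ.im - s.im) s.im
          simp at this
          linarith
        have hLL : LL ρ.im ≤ 2 * LL s.im := LL_le_two_mul (by nlinarith [abs_nonneg s.im])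
        have hLρ := one_le_LL ρ.im
        have hd : c / (4 * LL s.im) ≤ ‖s - ρ‖ := by
          have q : c / (2 * LL s.im) ≤ c / LL ρ.im := by gcongr
          have q2 : c / (2 * LL s.im) = c / (4 * LL s.im) + c / (4 * LL s.im) := by field_simp; norm_num
          have q3 : c / 4 / LL s.im = c / (4 * LL s.im) := by field_simp
          have := (le_abs_self _).trans (abs_re_le_norm (s - ρ))
          rw [sub_re] at this
          linarith
        have : 4 * LL s.im / c = 1 / (c / (4 * LL s.im)) := by field_simp
        rw [this]
        gcongr)
    refine this.trans ?_
    rw [Multiset.card_map, nsmul_eq_mul]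
    gcongr
  have := norm_add_le (deriv riemannZeta₁ s / riemannZeta₁ s - (S.map (fun ρ => 1/(s-ρ))).sum)
    ((S.map (fun ρ => 1/(s-ρ))).sum)
  rw [sub_add_cancel] at this
  have q : C * LL s.im ≤ C * LL s.im ^ 2 := by gcongr; nlinarith
  calc _ ≤ C * LL s.im + C * LL s.im * (4 * LL s.im / c) := by linarith
    _ ≤ C * LL s.im ^ 2 + C * LL s.im * (4 * LL s.im / c) := by linarith
    _ = _ := by ring

end Perron


namespace Perron

/-- rectangle boundary integral -/
noncomputable def RI (f : ℂ → ℂ) (a b V : ℝ) : ℂ :=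
  (∫ x in a..b, f (x + ((-V : ℝ) : ℂ) * I)) - (∫ x in a..b, f (x + (V : ℂ) * I))
    + I * (∫ y in (-V)..V, f (b + y * I)) - I * (∫ y in (-V)..V, f (a + y * I))

/-- boundary of rectangle -/
def RB (a b V : ℝ) : Set ℂ :=
  {s | (a ≤ s.re ∧ s.re ≤ b ∧ |s.im| = V) ∨ (|s.im| ≤ V ∧ (s.re = a ∨ s.re = b))}

/-- closed rectangle -/
def RR (a b V : ℝ) : Set ℂ := {s | a ≤ s.re ∧ s.re ≤ b ∧ |s.im| ≤ V}

variable {a b V : ℝ}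

lemma RB_subset_RR (hab : a ≤ b) : RB a b V ⊆ RR a b V := by
  rintro s (⟨h1, h2, h3⟩ | ⟨h1, h2 | h2⟩)
  · exact ⟨h1, h2, h3.le⟩
  · exact ⟨h2.ge, by rw [h2]; exact hab, h1⟩
  · exact ⟨by rw [h2]; exact hab, h2.le, h1⟩

lemma RB_ne_one (ha : a < 1) (hb : 1 < b) (hV : 0 < V) {s : ℂ} (hs : s ∈ RB a b V) : s ≠ 1 := by
  rintro rfl
  rcases hs with (⟨h1, h2, h3⟩ | ⟨h1, h2 | h2⟩)
  · simp at h3; linarith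
  · simp at h2; linarith
  · simp at h2; linarith

lemma mem_bot (hab : a ≤ b) (hV : 0 < V) {x : ℝ} (hx : x ∈ Set.uIcc a b) :
    ((x : ℂ) + ((-V : ℝ) : ℂ) * I) ∈ RB a b V := by
  rw [Set.uIcc_of_le hab] at hx
  left
  simp [hx.1, hx.2, abs_of_pos hV]

lemma mem_top (hab : a ≤ b) (hV : 0 < V) {x : ℝ} (hx : x ∈ Set.uIcc a b) :
    ((x : ℂ) + (V : ℂ) * I) ∈ RB a b V := by
  rw [Set.uIcc_of_le hab] at hx
  left
  simp [hx.1, hx.2, abs_of_pos hV]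

lemma mem_right (hV : 0 < V) {y : ℝ} (hy : y ∈ Set.uIcc (-V) V) :
    ((b : ℂ) + (y : ℂ) * I) ∈ RB a b V := by
  rw [Set.uIcc_of_le (by linarith)] at hy
  right
  simp [abs_le, hy.1, hy.2]

lemma mem_left (hV : 0 < V) {y : ℝ} (hy : y ∈ Set.uIcc (-V) V) :
    ((a : ℂ) + (y : ℂ) * I) ∈ RB a b V := by
  rw [Set.uIcc_of_le (by linarith)] at hy
  right
  simp [abs_le, hy.1, hy.2]

lemma int_bot (hab : a ≤ b) (hV : 0 < V) {f : ℂ → ℂ} (hf : ContinuousOn f (RB a b V)) :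
    IntervalIntegrable (fun x : ℝ => f (x + ((-V : ℝ) : ℂ) * I)) MeasureTheory.volume a b := by
  apply ContinuousOn.intervalIntegrable
  exact hf.comp (by fun_prop) (fun x hx => mem_bot hab hV hx)

lemma int_top (hab : a ≤ b) (hV : 0 < V) {f : ℂ → ℂ} (hf : ContinuousOn f (RB a b V)) :
    IntervalIntegrable (fun x : ℝ => f (x + (V : ℂ) * I)) MeasureTheory.volume a b := by
  apply ContinuousOn.intervalIntegrable
  exact hf.comp (by fun_prop) (fun x hx => mem_top hab hV hx)

lemma int_right (hV : 0 < V) {f : ℂ → ℂ} (hf : ContinuousOn f (RB a b V)) :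
    IntervalIntegrable (fun y : ℝ => f (b + (y : ℂ) * I)) MeasureTheory.volume (-V) V := by
  apply ContinuousOn.intervalIntegrable
  exact hf.comp (by fun_prop) (fun x hx => mem_right hV hx)

lemma int_left (hV : 0 < V) {f : ℂ → ℂ} (hf : ContinuousOn f (RB a b V)) :
    IntervalIntegrable (fun y : ℝ => f (a + (y : ℂ) * I)) MeasureTheory.volume (-V) V := by
  apply ContinuousOn.intervalIntegrable
  exact hf.comp (by fun_prop) (fun x hx => mem_left hV hx)

lemma RI_congr (hab : a ≤ b) (hV : 0 < V) {f g : ℂ → ℂ} (h : ∀ s ∈ RB a b V, f s = g s) :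
    RI f a b V = RI g a b V := by
  unfold RI
  rw [intervalIntegral.integral_congr (fun x hx => h _ (mem_bot hab hV hx)),
    intervalIntegral.integral_congr (fun x hx => h _ (mem_top hab hV hx)),
    intervalIntegral.integral_congr (fun x hx => h _ (mem_right hV hx)),
    intervalIntegral.integral_congr (fun x hx => h _ (mem_left hV hx))]

lemma RI_add (hab : a ≤ b) (hV : 0 < V) {f g : ℂ → ℂ} (hf : ContinuousOn f (RB a b V))
    (hg : ContinuousOn g (RB a b V)) :
    RI (fun s => f s + g s) a b V = RI f a b V + RI g a b V := by
  unfold RI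
  rw [intervalIntegral.integral_add (int_bot hab hV hf) (int_bot hab hV hg),
    intervalIntegral.integral_add (int_top hab hV hf) (int_top hab hV hg),
    intervalIntegral.integral_add (int_right hV hf) (int_right hV hg),
    intervalIntegral.integral_add (int_left hV hf) (int_left hV hg)]
  ring

lemma RI_const_mul {f : ℂ → ℂ} (k : ℂ) :
    RI (fun s => k * f s) a b V = k * RI f a b V := by
  unfold RI
  simp only [intervalIntegral.integral_const_mul]
  ring

lemma RI_deriv (hab : a ≤ b) (hV : 0 < V) {F f : ℂ → ℂ}
    (hF : ∀ s ∈ RB a b V, HasDerivAt F (f s) s) (hf : ContinuousOn f (RB a b V)) :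
    RI f a b V = 0 := by
  have hor : ∀ (c : ℂ) (x : ℝ), HasDerivAt (fun x : ℝ => (x : ℂ) + c) 1 x := by
    intro c x
    exact (hasDerivAt_id (x:ℂ)).comp_ofReal.add_const c
  have ver : ∀ (c : ℂ) (y : ℝ), HasDerivAt (fun y : ℝ => c + (y : ℂ) * I) I y := by
    intro c y
    have := ((hasDerivAt_id (y:ℂ)).comp_ofReal.mul_const I).const_add c
    simpa using this
  have e1 := intervalIntegral.integral_eq_sub_of_hasDerivAt
    (f := fun x : ℝ => F (x + ((-V : ℝ) : ℂ) * I)) (fun x hx => by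
      have := (hF _ (mem_bot hab hV hx)).comp x (hor _ x)
      rw [mul_one] at this
      exact this) (int_bot hab hV hf)
  have e2 := intervalIntegral.integral_eq_sub_of_hasDerivAt
    (f := fun x : ℝ => F (x + (V : ℂ) * I)) (fun x hx => by
      have := (hF _ (mem_top hab hV hx)).comp x (hor _ x)
      rw [mul_one] at this
      exact this) (int_top hab hV hf)
  have e3 := intervalIntegral.integral_eq_sub_of_hasDerivAt
    (f := fun y : ℝ => F (b + (y : ℂ) * I)) (fun y hy =>
      (hF _ (mem_right hV hy)).comp y (ver _ y)) ((int_right hV hf).mul_const I)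
  have e4 := intervalIntegral.integral_eq_sub_of_hasDerivAt
    (f := fun y : ℝ => F (a + (y : ℂ) * I)) (fun y hy =>
      (hF _ (mem_left hV hy)).comp y (ver _ y)) ((int_left hV hf).mul_const I)
  rw [intervalIntegral.integral_mul_const] at e3 e4
  unfold RI
  rw [e1, e2, mul_comm I, e3, mul_comm I, e4]
  ring

lemma log_diff {z : ℂ} (hz : 0 < z.im) : log z - log (-z) = Real.pi * I := by
  simp only [log, norm_neg, arg_neg_eq_arg_sub_pi_of_im_pos hz]
  push_cast
  ring

lemma RI_inv (ha : a < 1) (hb : 1 < b) (hV : 0 < V) :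
    RI (fun s => 1 / (s - 1)) a b V = 2 * Real.pi * I := by
  have hab : a ≤ b := by linarith
  have hcont : ContinuousOn (fun s : ℂ => 1 / (s - 1)) (RB a b V) := by
    apply ContinuousOn.div continuousOn_const (by fun_prop)
    intro s hs
    exact sub_ne_zero.2 (RB_ne_one ha hb hV hs)
  have hor : ∀ (c : ℂ) (x : ℝ), HasDerivAt (fun x : ℝ => (x : ℂ) + c - 1) 1 x := by
    intro c x
    exact ((hasDerivAt_id (x:ℂ)).comp_ofReal.add_const c).sub_const 1
  have ver : ∀ (c : ℂ) (y : ℝ), HasDerivAt (fun y : ℝ => c + (y : ℂ) * I - 1) I y := by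
    intro c y
    have := (((hasDerivAt_id (y:ℂ)).comp_ofReal.mul_const I).const_add c).sub_const 1
    simpa using this
  have e1 := intervalIntegral.integral_eq_sub_of_hasDerivAt
    (f := fun x : ℝ => log (x + ((-V : ℝ) : ℂ) * I - 1))
    (f' := fun x : ℝ => 1 / (x + ((-V : ℝ) : ℂ) * I - 1)) (a := a) (b := b) (fun x hx => by
      have := (hor (((-V : ℝ) : ℂ) * I) x).clog_real (by
        rw [mem_slitPlane_iff]; right; simp; exact hV.ne')
      exact this) (int_bot hab hV hcont)
  have e2 := intervalIntegral.integral_eq_sub_of_hasDerivAt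
    (f := fun x : ℝ => log (x + (V : ℂ) * I - 1))
    (f' := fun x : ℝ => 1 / (x + (V : ℂ) * I - 1)) (a := a) (b := b) (fun x hx => by
      have := (hor ((V : ℂ) * I) x).clog_real (by
        rw [mem_slitPlane_iff]; right; simp; exact hV.ne')
      exact this) (int_top hab hV hcont)
  have e3 := intervalIntegral.integral_eq_sub_of_hasDerivAt
    (f := fun y : ℝ => log (b + (y : ℂ) * I - 1))
    (f' := fun y : ℝ => 1 / (b + (y : ℂ) * I - 1) * I) (a := -V) (b := V) (fun y hy => by
      have := (ver b y).clog_real (by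
        rw [mem_slitPlane_iff]; left; simp; exact hb)
      rw [one_div_mul_eq_div]
      exact this) ((int_right hV hcont).mul_const I)
  have e4 := intervalIntegral.integral_eq_sub_of_hasDerivAt
    (f := fun y : ℝ => log (-(a + (y : ℂ) * I - 1)))
    (f' := fun y : ℝ => 1 / (a + (y : ℂ) * I - 1) * I) (a := -V) (b := V) (fun y hy => by
      have := (ver a y).neg.clog_real (by
        rw [mem_slitPlane_iff]; left; simp; exact ha)
      rw [one_div_mul_eq_div]
      simp only [Pi.neg_apply, neg_div_neg_eq] at this
      exact this) ((int_left hV hcont).mul_const I)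
  rw [intervalIntegral.integral_mul_const] at e3 e4
  unfold RI
  rw [e1, e2, mul_comm I, e3, mul_comm I, e4]
  have l1 := log_diff (z := (a : ℂ) + V * I - 1) (by simpa using hV)
  have l2 := log_diff (z := -((a : ℂ) + ((-V : ℝ) : ℂ) * I - 1)) (by simpa using hV)
  rw [neg_neg] at l2
  linear_combination l1 + l2

lemma RI_holo (hab : a ≤ b) (hV : 0 < V) {f : ℂ → ℂ} (hf : DifferentiableOn ℂ f (RR a b V)) :
    RI f a b V = 0 := by
  have := integral_boundary_rect_eq_zero_of_differentiableOn f ⟨a, -V⟩ ⟨b, V⟩ (by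
    apply hf.mono
    intro s hs
    simp only [mem_reProdIm] at hs
    rw [Set.uIcc_of_le hab, Set.uIcc_of_le (by linarith)] at hs
    exact ⟨hs.1.1, hs.1.2, abs_le.2 hs.2⟩)
  simpa [RI, smul_eq_mul] using this

lemma RI_cauchy_zero (ha : a < 1) (hb : 1 < b) (hV : 0 < V) {U : Set ℂ} (hU : IsOpen U)
    (hRU : RR a b V ⊆ U) {w : ℂ → ℂ} (hw : DifferentiableOn ℂ w U) :
    RI (fun s => w s / (s - 1)) a b V = 2 * Real.pi * I * w 1 := by
  have hab : a ≤ b := by linarith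
  have h1U : (1:ℂ) ∈ U := hRU ⟨by simpa using ha.le, by simpa using hb.le, by simpa using hV.le⟩
  have hds : DifferentiableOn ℂ (dslope w 1) U :=
    (differentiableOn_dslope (hU.mem_nhds h1U)).2 hw
  have hcont : ContinuousOn (fun s : ℂ => 1 / (s - 1)) (RB a b V) := by
    apply ContinuousOn.div continuousOn_const (by fun_prop)
    intro s hs
    exact sub_ne_zero.2 (RB_ne_one ha hb hV hs)
  have hc : RI (fun s => w s / (s - 1)) a b V =
      RI (fun s => dslope w 1 s + w 1 * (1 / (s - 1))) a b V := by
    apply RI_congr hab hV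
    intro s hs
    have hs1 := RB_ne_one ha hb hV hs
    rw [dslope_of_ne _ hs1, slope_def_field]
    have := sub_ne_zero.2 hs1
    field_simp
    ring
  rw [hc, RI_add hab hV (hds.continuousOn.mono ((RB_subset_RR hab).trans hRU))
    (g := fun s => w 1 * (1 / (s - 1))) (continuousOn_const.mul hcont), RI_const_mul, RI_inv ha hb hV,
    RI_holo hab hV (hds.mono hRU)]
  ring

lemma RI_cauchy (ha : a < 1) (hb : 1 < b) (hV : 0 < V) {U : Set ℂ} (hU : IsOpen U)
    (hRU : RR a b V ⊆ U) (m : ℕ) : ∀ {w : ℂ → ℂ} (_ : DifferentiableOn ℂ w U),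
    RI (fun s => w s / (s - 1) ^ (m + 1)) a b V
      = 2 * Real.pi * I * (iteratedDeriv m w 1 / m.factorial) := by
  have hab : a ≤ b := by linarith
  induction m with
  | zero =>
    intro w hw
    simpa using RI_cauchy_zero ha hb hV hU hRU hw
  | succ m ih =>
    intro w hw
    have hw' : DifferentiableOn ℂ (deriv w) U := hw.deriv hU
    have hBU : RB a b V ⊆ U := (RB_subset_RR hab).trans hRU
    have hm : ((m:ℂ) + 1) ≠ 0 := by exact_mod_cast Nat.succ_ne_zero m
    have hne : ∀ s ∈ RB a b V, s - 1 ≠ 0 := fun s hs => sub_ne_zero.2 (RB_ne_one ha hb hV hs)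
    have c1 : ContinuousOn (fun s => deriv w s / (s-1)^(m+1)) (RB a b V) :=
      (hw'.continuousOn.mono hBU).div (by fun_prop) (fun s hs => pow_ne_zero _ (hne s hs))
    have c2 : ContinuousOn (fun s => w s / (s-1)^(m+1+1)) (RB a b V) :=
      (hw.continuousOn.mono hBU).div (by fun_prop) (fun s hs => pow_ne_zero _ (hne s hs))
    have hz : RI (fun s => deriv w s / (s-1)^(m+1) + (-((m:ℂ)+1)) * (w s / (s-1)^(m+1+1))) a b V = 0 := by
      apply RI_deriv hab hV (F := fun s => w s / (s-1)^(m+1)) _ (c1.add (continuousOn_const.mul c2))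
      intro s hs
      have hd := (hw.differentiableAt (hU.mem_nhds (hBU hs))).hasDerivAt
      have := hd.div (((hasDerivAt_id s).sub_const 1).pow (m+1)) (pow_ne_zero _ (hne s hs))
      refine HasDerivAt.congr_deriv (f := fun s => w s / (s-1)^(m+1)) this ?_
      have hs1 := hne s hs
      simp only [id, Pi.pow_apply, Nat.add_sub_cancel, Pi.add_apply, Pi.mul_apply]
      push_cast
      field_simp
      ring
    rw [RI_add hab hV c1 (g := fun s => (-((m:ℂ)+1)) * (w s / (s-1)^(m+1+1))) (continuousOn_const.mul c2), RI_const_mul, ih hw'] at hz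
    rw [iteratedDeriv_succ', Nat.factorial_succ]
    push_cast
    have hf : (m.factorial : ℂ) ≠ 0 := by exact_mod_cast Nat.factorial_ne_zero m
    field_simp at hz ⊢
    linear_combination (-1) * hz

end Perron


namespace Perron

lemma laurent_coeff {g : ℂ → ℂ} {a : ℕ → ℂ} (hg : AnalyticAt ℂ g 1)
    (h : ∀ᶠ s in nhdsWithin (1 : ℂ) {(1 : ℂ)}ᶜ, HasSum (fun j : ℕ => a j * (s - 1) ^ j) (g s))
    (j : ℕ) : iteratedDeriv j g 1 = j.factorial * a j := by
  set g' := Function.update g 1 (a 0) with hg'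
  have hser : HasFPowerSeriesAt g' (FormalMultilinearSeries.ofScalars ℂ a) 1 := by
    rw [hasFPowerSeriesAt_iff']
    have h2 := eventually_nhdsWithin_iff.1 h
    filter_upwards [h2] with s hs
    simp only [FormalMultilinearSeries.coeff_ofScalars, smul_eq_mul]
    by_cases hs1 : s = 1
    · subst hs1
      have : g' 1 = a 0 := by simp [hg']
      rw [this]
      have := hasSum_single (f := fun j : ℕ => ((1:ℂ) - 1) ^ j * a j) 0 (by
        intro j hj; simp [hj])
      simpa using this
    · have e : g' s = g s := by simp [hg', hs1]
      rw [e]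
      have := hs hs1
      simpa [mul_comm] using this
  have hval : g 1 = a 0 := by
    have c1 : Filter.Tendsto g (nhdsWithin 1 {(1:ℂ)}ᶜ) (nhds (g 1)) :=
      hg.continuousAt.tendsto.mono_left nhdsWithin_le_nhds
    have c2 : Filter.Tendsto g' (nhdsWithin 1 {(1:ℂ)}ᶜ) (nhds (g' 1)) :=
      hser.analyticAt.continuousAt.tendsto.mono_left nhdsWithin_le_nhds
    have c3 : Filter.Tendsto g' (nhdsWithin 1 {(1:ℂ)}ᶜ) (nhds (g 1)) := by
      refine c1.congr' ?_
      filter_upwards [self_mem_nhdsWithin] with s hs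
      have : s ≠ 1 := hs
      simp [hg', this]
    have := tendsto_nhds_unique c3 c2
    rw [this]; simp [hg']
  have hgg : g' = g := by
    rw [hg', ← hval, Function.update_eq_self]
  rw [hgg] at hser
  have e := hser.eq_formalMultilinearSeries hg.hasFPowerSeriesAt
  have e2 := congrArg (fun p => FormalMultilinearSeries.coeff p j) e
  simp only [FormalMultilinearSeries.coeff_ofScalars] at e2
  rw [e2]
  have : (j.factorial : ℂ) ≠ 0 := by exact_mod_cast Nat.factorial_ne_zero j
  field_simp

lemma laurent_mul {f g : ℂ → ℂ} {p q : ℕ → ℂ} (hf : AnalyticAt ℂ f 1) (hg : AnalyticAt ℂ g 1)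
    (hp : ∀ j, iteratedDeriv j f 1 = j.factorial * p j)
    (hq : ∀ j, iteratedDeriv j g 1 = j.factorial * q j) (i : ℕ) :
    iteratedDeriv i (fun s => f s * g s) 1
      = i.factorial * ∑ j ∈ Finset.range (i + 1), p j * q (i - j) := by
  rw [iteratedDeriv_fun_mul hf.contDiffAt hg.contDiffAt, Finset.mul_sum]
  apply Finset.sum_congr rfl
  intro j hj
  have hj' : j ≤ i := Nat.lt_succ_iff.1 (Finset.mem_range.1 hj)
  rw [hp, hq, ← Nat.choose_mul_factorial_mul_factorial hj']
  push_cast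
  ring

lemma zeta1_analyticAt (s : ℂ) : AnalyticAt ℂ riemannZeta₁ s :=
  differentiable_riemannZeta₁.analyticAt s

lemma zeta1_coeff (C : ℕ → ℂ) (hC : ∀ᶠ s in nhdsWithin (1 : ℂ) {(1 : ℂ)}ᶜ,
      HasSum (fun j : ℕ => C j * (s - 1) ^ j) (riemannZeta s - 1 / (s - 1))) (j : ℕ) :
    iteratedDeriv j riemannZeta₁ 1 = j.factorial * (if j = 0 then 1 else C (j - 1)) := by
  refine laurent_coeff (a := fun j => if j = 0 then 1 else C (j - 1)) (zeta1_analyticAt 1) ?_ j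
  filter_upwards [hC, self_mem_nhdsWithin] with s hs hs1
  have hs1' : s ≠ 1 := hs1
  have := (hs.mul_right (s - 1))
  rw [hasSum_nat_add_iff' (f := fun j : ℕ => (if j = 0 then 1 else C (j - 1)) * (s - 1) ^ j) 1 |>.symm]
  simp only [Nat.add_eq_zero_iff, one_ne_zero, and_false, if_false, Nat.add_sub_cancel,
    Finset.range_one, Finset.sum_singleton, if_true, pow_zero, mul_one]
  convert! this using 1
  · funext j; ring
  · rw [riemannZeta_eq_inv_sub_mul hs1']
    have := sub_ne_zero.2 hs1'
    field_simp

lemma logDeriv_coeff (A : ℕ → ℂ) (hA : ∀ᶠ s in nhdsWithin (1 : ℂ) {(1 : ℂ)}ᶜ,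
      HasSum (fun j : ℕ => A j * (s - 1) ^ j)
        (deriv riemannZeta s / riemannZeta s + 1 / (s - 1))) (j : ℕ) :
    iteratedDeriv j (fun s => deriv riemannZeta₁ s / riemannZeta₁ s) 1 = j.factorial * A j := by
  have h1 : riemannZeta₁ 1 ≠ 0 := by rw [zeta1_one]; exact one_ne_zero
  refine laurent_coeff ((zeta1_analyticAt 1).deriv.div (zeta1_analyticAt 1) h1) ?_ j
  have hne : ∀ᶠ s in nhdsWithin (1 : ℂ) {(1 : ℂ)}ᶜ, riemannZeta₁ s ≠ 0 :=
    nhdsWithin_le_nhds ((zeta1_analyticAt 1).continuousAt.eventually_ne h1)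
  filter_upwards [hA, hne, self_mem_nhdsWithin] with s hs h0 hs1
  rw [logDeriv_zeta hs1 h0] at hs
  convert hs using 1
  simp only [Pi.div_apply]
  ring

lemma inv_coeff (j : ℕ) : iteratedDeriv j (fun s : ℂ => s⁻¹) 1 = j.factorial * (-1) ^ j := by
  have := iter_deriv_inv j (1:ℂ)
  rw [iteratedDeriv_eq_iterate]
  rw [one_zpow, mul_one] at this
  rw [mul_comm]
  exact this

lemma cpow_eq {Y : ℝ} (hY : 0 < Y) (s : ℂ) : (Y : ℂ) ^ s = cexp ((Real.log Y : ℂ) * s) := by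
  rw [cpow_def_of_ne_zero (by exact_mod_cast hY.ne'), ofReal_log hY.le]

lemma cpow_coeff {Y : ℝ} (hY : 0 < Y) (j : ℕ) : iteratedDeriv j (fun s : ℂ => (Y : ℂ) ^ s) 1
    = j.factorial * ((Y : ℂ) * (Real.log Y : ℂ) ^ j / j.factorial) := by
  have : (fun s : ℂ => (Y : ℂ) ^ s) = fun s => cexp ((Real.log Y : ℂ) * s) := funext (cpow_eq hY)
  rw [this, iteratedDeriv_cexp_const_mul]
  have hf : (j.factorial : ℂ) ≠ 0 := by exact_mod_cast Nat.factorial_ne_zero j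
  simp only
  rw [← cpow_eq hY, cpow_one]
  field_simp

lemma cpow_differentiable {Y : ℝ} (hY : 0 < Y) : Differentiable ℂ (fun s : ℂ => (Y : ℂ) ^ s) := by
  have : (fun s : ℂ => (Y : ℂ) ^ s) = fun s => cexp ((Real.log Y : ℂ) * s) := funext (cpow_eq hY)
  rw [this]
  fun_prop

/-- the regular weight -/
noncomputable def W (Y : ℝ) (s : ℂ) : ℂ := riemannZeta₁ s * s⁻¹ * (Y : ℂ) ^ s

/-- the regular part of the derivative of the logarithmic derivative -/
noncomputable def Q (n : ℕ) (s : ℂ) : ℂ :=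
  iteratedDeriv n (fun s => deriv riemannZeta₁ s / riemannZeta₁ s) s

lemma W_coeff (C : ℕ → ℂ) (hC : ∀ᶠ s in nhdsWithin (1 : ℂ) {(1 : ℂ)}ᶜ,
      HasSum (fun j : ℕ => C j * (s - 1) ^ j) (riemannZeta s - 1 / (s - 1)))
    {Y : ℝ} (hY : 0 < Y) (m : ℕ) :
    iteratedDeriv m (W Y) 1 = m.factorial * ∑ i ∈ Finset.range (m + 1),
      (∑ j ∈ Finset.range (i + 1), (if j = 0 then 1 else C (j - 1)) * (-1) ^ (i - j)) *
        ((Y : ℂ) * (Real.log Y : ℂ) ^ (m - i) / (m - i).factorial) := by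
  have hinv : AnalyticAt ℂ (fun s : ℂ => s⁻¹) 1 := analyticAt_id.inv one_ne_zero
  exact laurent_mul ((zeta1_analyticAt 1).mul hinv) ((cpow_differentiable hY).analyticAt 1)
    (laurent_mul (zeta1_analyticAt 1) hinv (zeta1_coeff C hC) inv_coeff)
    (cpow_coeff hY) m

lemma v_coeff (C : ℕ → ℂ) (k : ℕ) :
    (∑ j ∈ Finset.range (k + 1 + 1), (if j = 0 then 1 else C (j - 1)) * (-1 : ℂ) ^ (k + 1 - j))
      = (-1) ^ k * (-1 + ∑ j ∈ Finset.range (k + 1), (-1 : ℂ) ^ j * C j) := by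
  rw [Finset.sum_range_succ']
  simp only [Nat.add_eq_zero_iff, one_ne_zero, and_false, if_false, Nat.add_sub_cancel, if_true,
    Nat.sub_zero, one_mul, Nat.add_sub_add_right]
  rw [mul_add, Finset.mul_sum]
  have hsum : ∑ j ∈ Finset.range (k + 1), C j * (-1 : ℂ) ^ (k - j)
      = ∑ j ∈ Finset.range (k + 1), (-1 : ℂ) ^ k * ((-1) ^ j * C j) := by
    apply Finset.sum_congr rfl
    intro j hj
    have hj' : j ≤ k := Nat.lt_succ_iff.1 (Finset.mem_range.1 hj)
    obtain ⟨d, rfl⟩ := Nat.exists_eq_add_of_le hj'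
    have e : (-1 : ℂ) ^ (j + d) * (-1) ^ j = (-1) ^ d := by
      rw [pow_add, mul_right_comm, ← mul_pow]; norm_num
    rw [← mul_assoc, e, Nat.add_sub_cancel_left]
    ring
  rw [hsum]
  ring

lemma residue_eq (n : ℕ) (C A : ℕ → ℂ)
    (hC : ∀ᶠ s in nhdsWithin (1 : ℂ) {(1 : ℂ)}ᶜ,
      HasSum (fun j : ℕ => C j * (s - 1) ^ j) (riemannZeta s - 1 / (s - 1)))
    (hA : ∀ᶠ s in nhdsWithin (1 : ℂ) {(1 : ℂ)}ᶜ,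
      HasSum (fun j : ℕ => A j * (s - 1) ^ j)
        (deriv riemannZeta s / riemannZeta s + 1 / (s - 1))) {Y : ℝ} (hY : 0 < Y) :
    (-1 : ℂ) ^ (n + 1) * n.factorial * (iteratedDeriv (n + 1) (W Y) 1 / (n + 1).factorial)
      + Q n 1 * W Y 1 = Mterm C A n Y := by
  have hq : Q n 1 = n.factorial * A n := logDeriv_coeff A hA n
  have hw : W Y 1 = Y := by simp [W]
  have hf : ∀ j : ℕ, (j.factorial : ℂ) ≠ 0 := fun j => by exact_mod_cast Nat.factorial_ne_zero j
  rw [hq, hw, W_coeff C hC hY, mul_div_cancel_left₀ _ (hf _), Finset.sum_range_succ']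
  unfold Mterm
  simp only [v_coeff]
  have e0 : (∑ j ∈ Finset.range (0 + 1), (if j = 0 then 1 else C (j - 1)) * (-1 : ℂ) ^ (0 - j)) = 1 := by
    simp
  rw [e0]
  congr 1
  rw [mul_add, add_comm]
  congr 1
  · rw [Nat.sub_zero, Nat.factorial_succ]
    have := hf n
    have h2 : (n : ℂ) + 1 ≠ 0 := by exact_mod_cast Nat.succ_ne_zero n
    push_cast
    field_simp
  · rw [mul_assoc]
    congr 1
    rw [Finset.mul_sum]
    apply Finset.sum_congr rfl
    intro k hk
    have hk' : k ≤ n := Nat.lt_succ_iff.1 (Finset.mem_range.1 hk)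
    rw [Nat.add_sub_add_right, ← Nat.choose_mul_factorial_mul_factorial hk']
    have := hf (n - k)
    push_cast
    field_simp

lemma iteratedDeriv_eq (n : ℕ) {s : ℂ} (hs : s ≠ 1) (h0 : riemannZeta₁ s ≠ 0) :
    iteratedDeriv n (fun s => deriv riemannZeta s / riemannZeta s) s
      = (-1) ^ (n + 1) * n.factorial / (s - 1) ^ (n + 1) + Q n s := by
  have hs' : s - 1 ≠ 0 := sub_ne_zero.2 hs
  have hev : (fun s => deriv riemannZeta s / riemannZeta s) =ᶠ[nhds s]
      fun s => (-1 : ℂ) * (s - 1)⁻¹ + deriv riemannZeta₁ s / riemannZeta₁ s := by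
    filter_upwards [isOpen_ne.mem_nhds hs,
      (zeta1_analyticAt s).continuousAt.eventually_ne h0] with z hz hz0
    rw [logDeriv_zeta hz hz0, div_eq_mul_inv (-1 : ℂ)]
  rw [hev.iteratedDeriv_eq]
  have a1 : AnalyticAt ℂ (fun s : ℂ => (s - 1)⁻¹) s :=
    (analyticAt_id.sub analyticAt_const).inv hs'
  have a2 : AnalyticAt ℂ (fun s => deriv riemannZeta₁ s / riemannZeta₁ s) s :=
    (zeta1_analyticAt s).deriv.div (zeta1_analyticAt s) h0
  rw [iteratedDeriv_fun_add (f := fun s : ℂ => (-1 : ℂ) * (s - 1)⁻¹) (analyticAt_const.mul a1).contDiffAt a2.contDiffAt]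
  congr 1
  rw [iteratedDeriv_const_mul _ a1.contDiffAt,
    iteratedDeriv_comp_sub_const n (fun z : ℂ => z⁻¹) 1, iteratedDeriv_eq_iterate]
  have := iter_deriv_inv n (s - 1)
  rw [show (fun z : ℂ => z⁻¹) = Inv.inv from rfl]
  simp only [this]
  have e : (s - 1) ^ (-1 - (n : ℤ)) = ((s - 1) ^ (n + 1))⁻¹ := by
    rw [← zpow_natCast, ← zpow_neg]
    congr 1
    push_cast
    ring
  rw [e]
  field_simp
  ring

/-- the integrand -/
noncomputable def FF (n : ℕ) (Y : ℝ) (s : ℂ) : ℂ :=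
  iteratedDeriv n (fun s => deriv riemannZeta s / riemannZeta s) s *
        riemannZeta s * (Y : ℂ) ^ s / s

lemma FF_eq (n : ℕ) (Y : ℝ) {s : ℂ} (hs : s ≠ 1) (h0 : riemannZeta₁ s ≠ 0) :
    FF n Y s = ((-1) ^ (n + 1) * n.factorial) * (W Y s / (s - 1) ^ (n + 1 + 1))
      + (Q n s * W Y s) / (s - 1) := by
  have hs' : s - 1 ≠ 0 := sub_ne_zero.2 hs
  unfold FF
  rw [iteratedDeriv_eq n hs h0, riemannZeta_eq_inv_sub_mul hs, W]
  rw [pow_succ (s - 1) (n + 1)]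
  field_simp

end Perron


namespace Perron

lemma Q_analyticAt (n : ℕ) {s : ℂ} (h0 : riemannZeta₁ s ≠ 0) : AnalyticAt ℂ (Q n) s := by
  have a2 : AnalyticAt ℂ (fun s => deriv riemannZeta₁ s / riemannZeta₁ s) s :=
    (zeta1_analyticAt s).deriv.div (zeta1_analyticAt s) h0
  have := a2.iterated_deriv n
  rw [← iteratedDeriv_eq_iterate] at this
  exact this

lemma W_analyticAt {Y : ℝ} (hY : 0 < Y) {s : ℂ} (hs : s ≠ 0) : AnalyticAt ℂ (W Y) s :=
  ((zeta1_analyticAt s).mul (analyticAt_id.inv hs)).mul ((cpow_differentiable hY).analyticAt s)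

lemma contour (n : ℕ) (C A : ℕ → ℂ)
    (hC : ∀ᶠ s in nhdsWithin (1 : ℂ) {(1 : ℂ)}ᶜ,
      HasSum (fun j : ℕ => C j * (s - 1) ^ j) (riemannZeta s - 1 / (s - 1)))
    (hA : ∀ᶠ s in nhdsWithin (1 : ℂ) {(1 : ℂ)}ᶜ,
      HasSum (fun j : ℕ => A j * (s - 1) ^ j)
        (deriv riemannZeta s / riemannZeta s + 1 / (s - 1))) {Y : ℝ} (hY : 0 < Y)
    {a b V : ℝ} (ha : a < 1) (hb : 1 < b) (hV : 0 < V) {U : Set ℂ} (hU : IsOpen U)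
    (hRU : RR a b V ⊆ U) (hU0 : ∀ s ∈ U, riemannZeta₁ s ≠ 0 ∧ s ≠ 0) :
    ‖perronIntegral n b V Y - Mterm C A n Y‖ ≤
      ‖∫ x in a..b, FF n Y (x + ((-V : ℝ) : ℂ) * I)‖ + ‖∫ x in a..b, FF n Y (x + (V : ℂ) * I)‖
        + ‖∫ y in (-V)..V, FF n Y (a + y * I)‖ := by
  have hab : a ≤ b := by linarith
  have hBU : RB a b V ⊆ U := (RB_subset_RR hab).trans hRU
  have hWd : DifferentiableOn ℂ (W Y) U := fun s hs =>
    (W_analyticAt hY (hU0 s hs).2).differentiableAt.differentiableWithinAt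
  have hQd : DifferentiableOn ℂ (Q n) U := fun s hs =>
    (Q_analyticAt n (hU0 s hs).1).differentiableAt.differentiableWithinAt
  have hne : ∀ s ∈ RB a b V, s - 1 ≠ 0 := fun s hs => sub_ne_zero.2 (RB_ne_one ha hb hV hs)
  have c1 : ContinuousOn (fun s => W Y s / (s-1)^(n+1+1)) (RB a b V) :=
    (hWd.continuousOn.mono hBU).div (by fun_prop) (fun s hs => pow_ne_zero _ (hne s hs))
  have c2 : ContinuousOn (fun s => (Q n s * W Y s) / (s-1)) (RB a b V) :=
    ((hQd.mul hWd).continuousOn.mono hBU).div (by fun_prop) hne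
  have hRI : RI (FF n Y) a b V = 2 * Real.pi * I * Mterm C A n Y := by
    rw [RI_congr hab hV (g := fun s => ((-1) ^ (n + 1) * n.factorial) *
      (W Y s / (s - 1) ^ (n + 1 + 1)) + (Q n s * W Y s) / (s - 1))
      (fun s hs => FF_eq n Y (RB_ne_one ha hb hV hs) (hU0 s (hBU hs)).1)]
    rw [RI_add hab hV (f := fun s => ((-1) ^ (n + 1) * n.factorial) *
      (W Y s / (s - 1) ^ (n + 1 + 1))) (continuousOn_const.mul c1) c2, RI_const_mul,
      RI_cauchy ha hb hV hU hRU (n+1) hWd,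
      RI_cauchy_zero ha hb hV hU hRU (w := fun s => Q n s * W Y s) (hQd.mul hWd),
      ← residue_eq n C A hC hA hY]
    ring
  have hper : perronIntegral n b V Y = ((1 / (2 * Real.pi) : ℝ) : ℂ) *
      ∫ y in (-V)..V, FF n Y (b + y * I) := rfl
  unfold RI at hRI
  set B := ∫ x in a..b, FF n Y (x + ((-V : ℝ) : ℂ) * I)
  set T := ∫ x in a..b, FF n Y (x + (V : ℂ) * I)
  set Lf := ∫ y in (-V)..V, FF n Y (a + y * I)
  set Rt := ∫ y in (-V)..V, FF n Y (b + y * I)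
  have hRt : Rt = 2 * Real.pi * Mterm C A n Y + (I * (B - T) + Lf) := by
    linear_combination (-I) * hRI + (Rt - Lf - 2 * Real.pi * Mterm C A n Y) * I_mul_I
  have hpi : (Real.pi : ℂ) ≠ 0 := by exact_mod_cast Real.pi_ne_zero
  have e : perronIntegral n b V Y - Mterm C A n Y
      = ((1 / (2 * Real.pi) : ℝ) : ℂ) * (I * (B - T) + Lf) := by
    rw [hper, hRt]
    push_cast
    field_simp
    ring
  rw [e, norm_mul, norm_real, Real.norm_eq_abs, abs_of_pos (by positivity)]
  have h1 : 1 / (2 * Real.pi) ≤ 1 := by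
    rw [div_le_one (by positivity)]
    have := Real.pi_gt_three
    linarith
  have h2 : ‖I * (B - T) + Lf‖ ≤ ‖B‖ + ‖T‖ + ‖Lf‖ := by
    refine (norm_add_le _ _).trans ?_
    rw [norm_mul, norm_I, one_mul]
    have := norm_sub_le B T
    linarith
  calc _ ≤ 1 * ‖I * (B - T) + Lf‖ := by gcongr
    _ ≤ _ := by linarith

lemma FF_bound (n : ℕ) {Y : ℝ} (hY : 0 < Y) {s : ℂ} {r q : ℝ} (hr : 0 < r)
    (hs1 : r ≤ ‖s - 1‖) (h0 : riemannZeta₁ s ≠ 0) (hq : ‖Q n s‖ ≤ q) :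
    ‖FF n Y s‖ ≤ (n.factorial / r ^ (n + 1) + q) * ‖riemannZeta₁ s‖ / ‖s - 1‖ * Y ^ s.re / ‖s‖ := by
  have hs : s ≠ 1 := by
    rintro rfl; simp at hs1; linarith
  unfold FF
  rw [iteratedDeriv_eq n hs h0, riemannZeta_eq_inv_sub_mul hs, norm_div, norm_mul, norm_mul,
    norm_mul, norm_inv, norm_nat_cpow Y hY]
  have h1 : ‖(-1) ^ (n + 1) * (n.factorial : ℂ) / (s - 1) ^ (n + 1) + Q n s‖ ≤
      n.factorial / r ^ (n + 1) + q := by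
    refine (norm_add_le _ _).trans (add_le_add ?_ hq)
    rw [norm_div, norm_mul, norm_pow, norm_pow, norm_neg, norm_one, one_pow, one_mul,
      Complex.norm_natCast]
    gcongr
  rw [mul_div_assoc _ ‖riemannZeta₁ s‖, div_eq_inv_mul ‖riemannZeta₁ s‖]
  gcongr

lemma LL_mono {t u : ℝ} (h : |t| ≤ u) : LL t ≤ LL u := by
  unfold LL
  apply Real.log_le_log (by positivity)
  have := le_abs_self u
  linarith

lemma LL_continuous : Continuous LL := by
  unfold LL
  apply Continuous.log (by fun_prop)
  intro t
  positivity

lemma pow_le_exp (m : ℕ) {x : ℝ} (hx : 0 ≤ x) :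
    (2 + x) ^ m ≤ 4 ^ m * m.factorial * 2 * Real.exp (x / 4) := by
  have h := Real.pow_div_factorial_le_exp ((2 + x) / 4) (by positivity) m
  rw [div_le_iff₀ (by positivity), div_pow, div_le_iff₀ (by positivity)] at h
  refine h.trans ?_
  have : Real.exp ((2 + x)/4) ≤ 2 * Real.exp (x/4) := by
    have e : (2 + x)/4 = 1/2 + x/4 := by ring
    rw [e, Real.exp_add]
    gcongr
    have h1 : Real.exp (1/2) * Real.exp (1/2) = Real.exp 1 := by rw [← Real.exp_add]; norm_num
    have := Real.exp_one_lt_d9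
    nlinarith [Real.exp_pos (1/2)]
  calc _ ≤ 2 * Real.exp (x/4) * m.factorial * 4 ^ m := by gcongr
    _ = _ := by ring

end Perron


namespace Perron

lemma Q_bound {c C : ℝ} (hc : 0 < c) (hc2 : c ≤ 1/48)
    (hb : ∀ s : ℂ, 1 - c / LL s.im ≤ s.re → s.re ≤ 17/16 + 1/12 →
      riemannZeta₁ s ≠ 0 ∧ ‖deriv riemannZeta₁ s / riemannZeta₁ s‖ ≤ C * LL s.im ^ 2)
    (hC : 1 ≤ C) (n : ℕ) {V : ℝ} {s : ℂ} (h1 : 1 - c / (2 * LL (V + 1)) ≤ s.re)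
    (h2 : s.re ≤ 17/16) (h3 : |s.im| ≤ V) :
    ‖Q n s‖ ≤ n.factorial * (C * LL (V+1) ^ 2) / (c / (2 * LL (V + 1))) ^ n := by
  have hL := one_le_LL (V + 1)
  set l := LL (V+1)
  set r := c / (2 * l) with hr
  have hrp : 0 < r := by positivity
  have hr1 : r ≤ 1/48 := (div_le_self hc.le (by linarith)).trans hc2
  have h2r : c / l = 2 * r := by rw [hr]; field_simp
  have key : ∀ z ∈ Metric.closedBall s r, riemannZeta₁ z ≠ 0 ∧
      ‖deriv riemannZeta₁ z / riemannZeta₁ z‖ ≤ C * l ^ 2 := by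
    intro z hz
    have hz' : ‖z - s‖ ≤ r := by simpa [dist_eq_norm] using hz
    have hre := abs_le.1 ((abs_re_le_norm _).trans hz')
    have him := (abs_im_le_norm _).trans hz'
    rw [sub_re] at hre
    rw [sub_im] at him
    have him2 : |z.im| ≤ V + 1 := by
      have := abs_add_le (z.im - s.im) s.im
      rw [sub_add_cancel] at this
      linarith
    have hl : LL z.im ≤ l := LL_mono him2
    have hl1 := one_le_LL z.im
    have hcl : c / l ≤ c / LL z.im := by gcongr
    obtain ⟨k1, k2⟩ := hb z (by linarith) (by linarith)
    exact ⟨k1, k2.trans (by gcongr)⟩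
  refine Complex.norm_iteratedDeriv_le_of_forall_mem_sphere_norm_le n hrp ?_ ?_
  · apply DifferentiableOn.diffContOnCl
    rw [closure_ball _ hrp.ne']
    intro z hz
    exact (((zeta1_analyticAt z).deriv.div (zeta1_analyticAt z)
      (key z hz).1).differentiableAt).differentiableWithinAt
  · intro z hz
    exact (key z (Metric.sphere_subset_closedBall hz)).2

set_option maxHeartbeats 1000000 in
theorem main (n : ℕ) (C A : ℕ → ℂ)
    (hC : ∀ᶠ s in nhdsWithin (1 : ℂ) {(1 : ℂ)}ᶜ,
      HasSum (fun j : ℕ => C j * (s - 1) ^ j) (riemannZeta s - 1 / (s - 1)))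
    (hA : ∀ᶠ s in nhdsWithin (1 : ℂ) {(1 : ℂ)}ᶜ,
      HasSum (fun j : ℕ => A j * (s - 1) ^ j)
        (deriv riemannZeta s / riemannZeta s + 1 / (s - 1))) :
    ∃ c₁ > (0 : ℝ), ∃ c₂ > (0 : ℝ), ∃ K > (0 : ℝ), ∃ Y₀ : ℝ, ∀ Y ≥ Y₀,
      ∀ c V : ℝ, c = 1 + 1 / Real.log (2 * Real.pi * Y) →
        V = Real.exp (c₁ * Real.sqrt (Real.log Y)) →
        ‖perronIntegral n c V Y - Mterm C A n Y‖ ≤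
          K * Y * Real.exp (-c₂ * Real.sqrt (Real.log Y)) := by
  obtain ⟨c, B, hc, hc48, hB, hbd⟩ := logDeriv_bound
  obtain ⟨K, hK1, hK⟩ := zeta1_bound_all
  set D : ℝ := n.factorial * (1 + B) * (2 / c) ^ (n + 1) with hD
  set P : ℝ := 4 ^ (n + 4) * (n + 4).factorial * 2 with hP
  have hDp : 0 < D := by positivity
  have hPp : 0 < P := by positivity
  refine ⟨c / 20, by positivity, c / 80, by positivity, 72 * D * P + 128 * D * K * P / c,
    by positivity, Real.exp ((40 / c) ^ 2), ?_⟩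
  intro Y hY b V hb hV
  have hYp : 0 < Y := (Real.exp_pos _).trans_le hY
  have hlogY : (40 / c) ^ 2 ≤ Real.log Y := (Real.le_log_iff_exp_le hYp).2 hY
  set u := Real.sqrt (Real.log Y) with hu
  have hu1 : 40 / c ≤ u := Real.le_sqrt_of_sq_le hlogY
  have hlog0 : 0 ≤ Real.log Y := (by positivity : (0:ℝ) ≤ (40 / c)^2).trans hlogY
  have hu2 : u ^ 2 = Real.log Y := Real.sq_sqrt hlog0
  have hcu : 40 ≤ c * u := by
    rw [div_le_iff₀ hc] at hu1; linarith
  have hup : 0 < u := (by positivity : 0 < 40 / c).trans_le hu1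
  have hu40 : 40 ≤ u := by nlinarith
  set x := c / 20 * u with hx
  have hx2 : 2 ≤ x := by rw [hx]; linarith
  have hxu : x ≤ u := by rw [hx]; nlinarith
  have hV3 : 3 ≤ V := by
    rw [hV]; have := Real.add_one_le_exp x; linarith
  have hVp : 0 < V := by linarith
  have hL := one_le_LL (V + 1)
  set l := LL (V+1) with hl
  have hlx : l ≤ 2 + x := by
    rw [hl, LL, Real.log_le_iff_le_exp (by positivity), Real.exp_add, ← hV,
      abs_of_pos (by linarith)]
    have e2 : Real.exp 2 = Real.exp 1 * Real.exp 1 := by rw [← Real.exp_add]; norm_num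
    have e1 := Real.exp_one_gt_d9
    have e3 : 5 ≤ Real.exp 2 := by rw [e2]; nlinarith
    have := mul_le_mul_of_nonneg_right e3 hVp.le
    linarith
  set r := c / (2 * l) with hr
  have hrp : 0 < r := by positivity
  have hr1 : r ≤ 1/48 := (div_le_self hc.le (by linarith)).trans hc48
  have h2r : c / l = 2 * r := by rw [hr]; field_simp
  have hrinv : 1 / r = 2 / c * l := by rw [hr]; field_simp
  have hrlog : 5 * u ≤ r * Real.log Y := by
    rw [hr, ← hu2, div_mul_eq_mul_div, le_div_iff₀ (by positivity)]
    have : 10 * l ≤ c * u := by rw [hx] at hlx hx2; linarith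
    nlinarith
  -- the abscissa b
  have hlog2 : Real.log Y ≤ Real.log (2 * Real.pi * Y) := by
    apply Real.log_le_log hYp
    have := Real.pi_gt_three
    nlinarith
  have hlogbig : 1600 ≤ Real.log Y := by rw [← hu2]; nlinarith
  have hb1 : 1 < b := by
    rw [hb]
    have : 0 < 1 / Real.log (2 * Real.pi * Y) := by
      apply one_div_pos.2; linarith
    linarith
  have hb2 : b ≤ 17/16 := by
    rw [hb]
    have : 1 / Real.log (2 * Real.pi * Y) ≤ 1/16 := by
      apply one_div_le_one_div_of_le (by norm_num); linarith
    linarith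
  have hY1 : 1 ≤ Y := by
    have := Real.add_one_le_exp ((40/c)^2)
    have : 0 ≤ (40/c)^2 := by positivity
    linarith
  have hYb : Y ^ b ≤ 3 * Y := by
    rw [hb, Real.rpow_add hYp, Real.rpow_one, mul_comm]
    gcongr
    rw [Real.rpow_def_of_pos hYp]
    have : Real.log Y * (1 / Real.log (2 * Real.pi * Y)) ≤ 1 := by
      rw [mul_one_div, div_le_one (by linarith)]; exact hlog2
    have h2 := Real.exp_le_exp.2 this
    have := Real.exp_one_lt_d9
    linarith
  set a := 1 - r with ha
  -- region
  set U : Set ℂ := {s | 1 - c / LL s.im < s.re ∧ s.re < 17/16 + 1/12} with hU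
  have hUo : IsOpen U := by
    apply IsOpen.inter
    · apply isOpen_lt _ continuous_re
      apply continuous_const.sub
      apply continuous_const.div (LL_continuous.comp continuous_im)
      intro s
      have := one_le_LL s.im
      exact (lt_of_lt_of_le one_pos this).ne'
    · exact isOpen_lt continuous_re continuous_const
  have hU0 : ∀ s ∈ U, riemannZeta₁ s ≠ 0 ∧ s ≠ 0 := by
    rintro s ⟨h1, h2⟩
    refine ⟨(hbd s h1.le h2.le).1, ?_⟩
    rintro rfl
    have : c / LL (0:ℂ).im ≤ c := div_le_self hc.le (one_le_LL _)
    have h1' : (1:ℝ) - c / LL (0:ℂ).im < (0:ℂ).re := h1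
    rw [zero_re] at h1'
    generalize c / LL (0:ℂ).im = w at h1' this
    linarith
  have hRU : RR a b V ⊆ U := by
    rintro s ⟨h1, h2, h3⟩
    have h4 : LL s.im ≤ l := LL_mono (by linarith)
    have h5 := one_le_LL s.im
    have : c / l ≤ c / LL s.im := by gcongr
    exact ⟨by linarith, by linarith⟩
  have hcont := contour n C A hC hA hYp (a := a) (b := b) (V := V) (by linarith) hb1 hVp hUo hRU hU0
  -- bracket
  set G : ℝ := n.factorial / r ^ (n + 1) + n.factorial * (B * l ^ 2) / r ^ n with hG
  have hGp : 0 < G := by positivity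
  have hGD : G ≤ D * l ^ (n + 3) := by
    have e1 : n.factorial / r ^ (n + 1) = n.factorial * (2 / c * l) ^ (n + 1) := by
      rw [← hrinv, one_div, inv_pow]; rfl
    have e2 : n.factorial * (B * l ^ 2) / r ^ n = n.factorial * (B * l ^ 2) * (2 / c * l) ^ n := by
      rw [← hrinv, one_div, inv_pow]; rfl
    have h2c : 1 ≤ 2 / c * l := by
      rw [← hrinv, le_div_iff₀ hrp]; linarith
    have e3 : (2 / c * l) ^ n ≤ (2 / c * l) ^ (n + 1) := pow_le_pow_right₀ h2c (by omega)
    have e4 : 1 ≤ l ^ 2 := one_le_pow₀ hL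
    rw [hG, e1, e2, hD]
    calc _ ≤ n.factorial * (2 / c * l) ^ (n + 1) * l ^ 2
          + n.factorial * (B * l ^ 2) * (2 / c * l) ^ (n + 1) := by
          apply add_le_add
          · exact le_mul_of_one_le_right (by positivity) e4
          · gcongr
      _ = _ := by rw [mul_pow]; ring
  have hlP : l ^ (n + 4) ≤ P * Real.exp (x / 4) := by
    calc l ^ (n+4) ≤ (2 + x) ^ (n + 4) := by gcongr
      _ ≤ _ := by rw [hP]; exact pow_le_exp (n + 4) (by linarith)
  have hlP3 : l ^ (n + 3) ≤ P * Real.exp (x / 4) :=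
    (pow_le_pow_right₀ hL (by omega)).trans hlP
  have hFF : ∀ s ∈ RR a b V, r ≤ ‖s - 1‖ →
      ‖FF n Y s‖ ≤ G * ‖riemannZeta₁ s‖ / ‖s - 1‖ * Y ^ s.re / ‖s‖ := by
    intro s hs hrs
    refine FF_bound n hYp hrp hrs (hU0 s (hRU hs)).1 ?_
    exact Q_bound hc hc48 hbd hB n (V := V) hs.1 (by linarith [hs.2.1]) hs.2.2
  have hab : a ≤ b := by linarith
  -- horizontal edges
  have hhor : ∀ s : ℂ, a ≤ s.re → s.re ≤ b → |s.im| = V →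
      ‖FF n Y s‖ ≤ 36 * D * P * Y * Real.exp (-(x/4)) := by
    intro s h1 h2 h3
    have hs1 : V ≤ ‖s - 1‖ := by
      have := abs_im_le_norm (s - 1)
      simp only [sub_im, one_im, sub_zero] at this
      linarith
    have hs0 : V ≤ ‖s‖ := by
      have := abs_im_le_norm s
      linarith
    have hz := zeta1_bound s (by linarith) (by linarith) (by linarith)
    rw [h3] at hz
    have hs1p : 0 < ‖s - 1‖ := by linarith
    have hf := hFF s ⟨h1, h2, h3.le⟩ (by linarith)
    have hsq : Real.sqrt V = Real.exp (x/2) := by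
      rw [hV, ← Real.exp_half]
    have hYs : Y ^ s.re ≤ 3 * Y := (Real.rpow_le_rpow_of_exponent_le hY1 h2).trans hYb
    calc _ ≤ G * ‖riemannZeta₁ s‖ / ‖s - 1‖ * Y ^ s.re / ‖s‖ := hf
      _ ≤ G * (‖s - 1‖ * (12 * Real.sqrt V)) / ‖s - 1‖ * (3 * Y) / V := by gcongr
      _ = G * (36 * Y * (Real.sqrt V / V)) := by field_simp; ring
      _ ≤ (D * (P * Real.exp (x/4))) * (36 * Y * (Real.sqrt V / V)) := by
          gcongr
          exact hGD.trans (by gcongr)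
      _ = 36 * D * P * Y * (Real.exp (x/4) * (Real.sqrt V / V)) := by ring
      _ = _ := by
          congr 1
          rw [hsq, hV, ← Real.exp_sub, ← Real.exp_add]
          congr 1
          ring
  have hleft : ∀ s : ℂ, s.re = a → |s.im| ≤ V →
      ‖FF n Y s‖ * (2 * V) ≤ 128 * D * K * P / c * Y * Real.exp (-(x/4)) := by
    intro s h1 h3
    have hs1 : r ≤ ‖s - 1‖ := by
      have := (neg_le_abs _).trans (abs_re_le_norm (s - 1))
      simp only [sub_re, one_re] at this
      linarith
    have hs0 : 1/2 ≤ ‖s‖ := by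
      have := (le_abs_self _).trans (abs_re_le_norm s)
      linarith
    have hz := hK s (by linarith) (by linarith)
    have hz2 : ‖riemannZeta₁ s‖ ≤ K * (4 * V)^2 := by
      refine hz.trans ?_
      gcongr
      linarith
    have hf := hFF s ⟨h1.ge, by linarith, h3⟩ hs1
    have hYs : Y ^ s.re = Y * Real.exp (-(r * Real.log Y)) := by
      rw [h1, ha, sub_eq_add_neg, Real.rpow_add hYp, Real.rpow_one, Real.rpow_def_of_pos hYp]
      congr 2
      ring
    have hYs2 : Y ^ s.re ≤ Y * Real.exp (-(5 * u)) := by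
      rw [hYs]
      gcongr
    calc _ ≤ G * ‖riemannZeta₁ s‖ / ‖s - 1‖ * Y ^ s.re / ‖s‖ * (2 * V) := by gcongr
      _ ≤ G * (K * (4 * V)^2) / r * (Y * Real.exp (-(5 * u))) / (1/2) * (2 * V) := by gcongr
      _ = G * (1 / r) * (64 * K * V^3 * (Y * Real.exp (-(5 * u)))) := by ring
      _ = G * l * (2 / c * (64 * K * V^3 * (Y * Real.exp (-(5 * u))))) := by rw [hrinv]; ring
      _ ≤ (D * l ^ (n + 3)) * l * (2 / c * (64 * K * V^3 * (Y * Real.exp (-(5 * u))))) := by gcongr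
      _ = D * l ^ (n + 4) * (2 / c * (64 * K * V^3 * (Y * Real.exp (-(5 * u))))) := by ring
      _ ≤ D * (P * Real.exp (x/4)) * (2 / c * (64 * K * V^3 * (Y * Real.exp (-(5 * u))))) := by gcongr
      _ = 128 * D * K * P / c * Y * (Real.exp (x/4) * V^3 * Real.exp (-(5 * u))) := by ring
      _ ≤ _ := by
          gcongr
          rw [hV, ← Real.exp_nat_mul, ← Real.exp_add, ← Real.exp_add]
          apply Real.exp_le_exp.2
          push_cast
          linarith
  have hexp : Real.exp (-(c/80) * u) = Real.exp (-(x/4)) := by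
    congr 1
    rw [hx]; ring
  rw [hexp]
  have hlen : |b - a| ≤ 1 := by
    rw [abs_of_nonneg (by linarith)]; linarith
  have i1 : ‖∫ x in a..b, FF n Y (x + ((-V : ℝ) : ℂ) * I)‖ ≤ 36 * D * P * Y * Real.exp (-(x/4)) := by
    refine (intervalIntegral.norm_integral_le_of_norm_le_const
      (C := 36 * D * P * Y * Real.exp (-(x/4))) ?_).trans ?_
    · intro t ht
      rw [Set.uIoc_of_le hab] at ht
      apply hhor
      · simpa using ht.1.le
      · simpa using ht.2
      · simp [abs_of_pos hVp]
    · exact mul_le_of_le_one_right (by positivity) hlen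
  have i2 : ‖∫ x in a..b, FF n Y (x + (V : ℂ) * I)‖ ≤ 36 * D * P * Y * Real.exp (-(x/4)) := by
    refine (intervalIntegral.norm_integral_le_of_norm_le_const
      (C := 36 * D * P * Y * Real.exp (-(x/4))) ?_).trans ?_
    · intro t ht
      rw [Set.uIoc_of_le hab] at ht
      apply hhor
      · simpa using ht.1.le
      · simpa using ht.2
      · simp [abs_of_pos hVp]
    · exact mul_le_of_le_one_right (by positivity) hlen
  have i3 : ‖∫ y in (-V)..V, FF n Y (a + y * I)‖ ≤ 128 * D * K * P / c * Y * Real.exp (-(x/4)) := by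
    refine (intervalIntegral.norm_integral_le_of_norm_le_const
      (C := 128 * D * K * P / c * Y * Real.exp (-(x/4)) / (2 * V)) ?_).trans ?_
    · intro t ht
      rw [Set.uIoc_of_le (by linarith)] at ht
      rw [le_div_iff₀ (by positivity)]
      apply hleft
      · simp
      · simpa using abs_le.2 ⟨ht.1.le, ht.2⟩
    · rw [abs_of_pos (by linarith)]
      apply le_of_eq
      field_simp
      ring
  refine hcont.trans ?_
  calc _ ≤ _ := add_le_add (add_le_add i1 i2) i3
    _ = _ := by ring

end Perron

/-- unconditionally, with `c = 1 + 1/log(2πY)` and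
`V = e^{C√(log Y)}`, the truncated Perron integral equals the residue
`M_n(Y)` up to an error `O(Y e^{-C'√(log Y)})`. -/
theorem perron_integral_residue_unconditional (n : ℕ) (hn : 1 ≤ n) (C A : ℕ → ℂ)
    (hC : ∀ᶠ s in nhdsWithin (1 : ℂ) {(1 : ℂ)}ᶜ,
      HasSum (fun j : ℕ => C j * (s - 1) ^ j) (riemannZeta s - 1 / (s - 1)))
    (hA : ∀ᶠ s in nhdsWithin (1 : ℂ) {(1 : ℂ)}ᶜ,
      HasSum (fun j : ℕ => A j * (s - 1) ^ j)
        (deriv riemannZeta s / riemannZeta s + 1 / (s - 1))) :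
    ∃ c₁ > (0 : ℝ), ∃ c₂ > (0 : ℝ), ∃ K > (0 : ℝ), ∃ Y₀ : ℝ, ∀ Y ≥ Y₀,
      ∀ c V : ℝ, c = 1 + 1 / Real.log (2 * Real.pi * Y) →
        V = Real.exp (c₁ * Real.sqrt (Real.log Y)) →
        ‖perronIntegral n c V Y - Mterm C A n Y‖ ≤
          K * Y * Real.exp (-c₂ * Real.sqrt (Real.log Y)) := by
  exact Perron.main n C A hC hA
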